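/- arXiv:1903.12244 — 11 statements merged into one kernel-verified Lean document; each statement's English description precedes it below -/
import Mathlib

section
/- Let p, q ∈ (1, ∞) satisfy 1/p + 1/q < 1. Then for every bounded bilinear form A : ℓ_p × ℓ_q → 𝕂 that is nonnegative (i.e., A(e_{j₁}, e_{j₂}) ≥ 0 for all j₁, j₂), one has ( Σ_{j₁=1}^∞ ( Σ_{j₂=1}^∞ A(e_{j₁}, e_{j₂})^{q*} )^{(1/q*)·(1/(1−(1/p+1/q)))} )^{1−(1/p+1/q)} ≤ ‖A‖, where ‖A‖ is the operator norm of A. -/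
open scoped ENNReal

lemma HL_absorb (S C θ : ℝ) (hS : 0 ≤ S) (hC : 0 ≤ C) (hθ : θ < 1) (h : S ≤ C * S ^ θ) :
    S ^ (1 - θ) ≤ C := by
  rcases hS.eq_or_lt with h0 | h0
  · rw [← h0, Real.zero_rpow (by linarith)]; exact hC
  · rw [Real.rpow_sub h0, Real.rpow_one, div_le_iff₀ (Real.rpow_pos_of_pos h0 _)]; exact h

lemma HL_super (J : Finset ℕ) (f : ℕ → ℝ) (hf : ∀ j, 0 ≤ f j) (s : ℝ) (hs : 1 ≤ s) :
    ∑ j ∈ J, f j ^ s ≤ (∑ j ∈ J, f j) ^ s := by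
  induction J using Finset.induction_on with
  | empty => simp [Real.zero_rpow (show s ≠ 0 by linarith)]
  | insert j J hj ih =>
    rw [Finset.sum_insert hj, Finset.sum_insert hj]
    refine le_trans (by gcongr) (Real.add_rpow_le_rpow_add (hf j) (Finset.sum_nonneg fun i _ => hf i) hs)

lemma HL_core (p q s l : ℝ) (hp : 1 < p) (hq : 1 < q) (hs : 1 < s) (hl : 0 < l)
    (hqs : 1 / q + 1 / s = 1) (hpl : 1 / l = 1 / s - 1 / p)
    (J K : Finset ℕ) (a : ℕ → ℕ → ℝ) (ha : ∀ j k, 0 ≤ a j k) (M : ℝ) (hM : 0 ≤ M)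
    (H : ∀ x y : ℕ → ℝ, (∀ j, 0 ≤ x j) → (∀ k, 0 ≤ y k) →
      ∑ k ∈ K, (∑ j ∈ J, a j k * x j) * y k
        ≤ M * (∑ j ∈ J, x j ^ p) ^ (1 / p) * (∑ k ∈ K, y k ^ q) ^ (1 / q)) :
    ∑ j ∈ J, (∑ k ∈ K, a j k ^ s) ^ (1 / s * l) ≤ M ^ l := by
  have hs0 : s ≠ 0 := by linarith
  have hp0 : p ≠ 0 := by linarith
  have hq0 : q ≠ 0 := by linarith
  have hl0 : l ≠ 0 := by linarith
  have hsq : (s - 1) * q = s := by field_simp at hqs; linarith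
  have step1 : ∀ x : ℕ → ℝ, (∀ j, 0 ≤ x j) →
      ∑ k ∈ K, (∑ j ∈ J, a j k * x j) ^ s ≤ (M * (∑ j ∈ J, x j ^ p) ^ (1 / p)) ^ s := by
    intro x hx
    have hc : ∀ k, 0 ≤ ∑ j ∈ J, a j k * x j :=
      fun k => Finset.sum_nonneg fun j _ => mul_nonneg (ha j k) (hx j)
    have hX : 0 ≤ ∑ j ∈ J, x j ^ p := Finset.sum_nonneg fun j _ => Real.rpow_nonneg (hx j) _
    have hMX : 0 ≤ M * (∑ j ∈ J, x j ^ p) ^ (1 / p) := by positivity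
    have hS : 0 ≤ ∑ k ∈ K, (∑ j ∈ J, a j k * x j) ^ s :=
      Finset.sum_nonneg fun k _ => Real.rpow_nonneg (hc k) _
    have h1 := H x (fun k => (∑ j ∈ J, a j k * x j) ^ (s - 1)) hx
      (fun k => Real.rpow_nonneg (hc k) _)
    have e1 : ∀ k, (∑ j ∈ J, a j k * x j) * (∑ j ∈ J, a j k * x j) ^ (s - 1)
        = (∑ j ∈ J, a j k * x j) ^ s := by
      intro k
      rw [← Real.rpow_one_add' (hc k) (by simpa using hs0)]
      congr 1; ring
    have e2 : ∀ k, ((∑ j ∈ J, a j k * x j) ^ (s - 1)) ^ q = (∑ j ∈ J, a j k * x j) ^ s := by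
      intro k
      rw [← Real.rpow_mul (hc k), hsq]
    simp only [e1, e2] at h1
    have h2 := HL_absorb _ _ _ hS hMX (by rw [div_lt_one (by linarith)]; exact hq) h1
    have h3 : 1 - 1 / q = 1 / s := by linarith
    rw [h3] at h2
    have h4 := Real.rpow_le_rpow (by positivity) h2 (by linarith : 0 ≤ s)
    rwa [← Real.rpow_mul hS, one_div_mul_cancel hs0, Real.rpow_one] at h4
  have hb : ∀ j, 0 ≤ ∑ k ∈ K, a j k ^ s :=
    fun j => Finset.sum_nonneg fun k _ => Real.rpow_nonneg (ha j k) _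
  set b : ℕ → ℝ := fun j => ∑ k ∈ K, a j k ^ s with hbdef
  change ∀ j, 0 ≤ b j at hb
  change ∑ j ∈ J, b j ^ (1 / s * l) ≤ M ^ l
  have hS : 0 ≤ ∑ j ∈ J, b j ^ (1 / s * l) :=
    Finset.sum_nonneg fun j _ => Real.rpow_nonneg (hb j) _
  have hx : ∀ j, 0 ≤ b j ^ (1 / s * l / p) := fun j => Real.rpow_nonneg (hb j) _
  have h1 := step1 (fun j => b j ^ (1 / s * l / p)) hx
  have e1 : ∀ j, (b j ^ (1 / s * l / p)) ^ p = b j ^ (1 / s * l) := by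
    intro j; rw [← Real.rpow_mul (hb j)]; congr 1; field_simp
  simp only [e1] at h1
  have hexp : 1 + 1 / s * l / p * s = 1 / s * l := by
    have : 1 = l * (1 / s - 1 / p) := by rw [← hpl]; field_simp
    have h2 : 1 / s * l / p * s = l * (1 / p) := by field_simp
    rw [h2]; linarith
  have h2 : ∑ j ∈ J, b j ^ (1 / s * l) ≤ ∑ k ∈ K, (∑ j ∈ J, a j k * b j ^ (1 / s * l / p)) ^ s := by
    calc ∑ j ∈ J, b j ^ (1 / s * l) = ∑ j ∈ J, ∑ k ∈ K, (a j k * b j ^ (1 / s * l / p)) ^ s := by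
          refine Finset.sum_congr rfl fun j _ => ?_
          simp_rw [Real.mul_rpow (ha j _) (hx j), ← Real.rpow_mul (hb j)]
          rw [← Finset.sum_mul]
          change _ = b j * _
          rw [← Real.rpow_one_add' (hb j) (by rw [hexp]; positivity), hexp]
      _ = ∑ k ∈ K, ∑ j ∈ J, (a j k * b j ^ (1 / s * l / p)) ^ s := Finset.sum_comm
      _ ≤ _ := Finset.sum_le_sum fun k _ =>
          HL_super J _ (fun j => mul_nonneg (ha j k) (hx j)) s hs.le
  have h3 := h2.trans h1
  rw [Real.mul_rpow hM (by positivity), ← Real.rpow_mul hS] at h3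
  have hth : 1 - 1 / p * s = s / l := by
    have : s / l = s * (1 / l) := by ring
    rw [this, hpl]; field_simp
  have h4 := HL_absorb _ _ _ hS (by positivity)
    (by have : 0 < s / l := by positivity
        linarith) h3
  rw [hth] at h4
  have h5 := Real.rpow_le_rpow (by positivity) h4 (by positivity : 0 ≤ l / s)
  rw [← Real.rpow_mul hS, ← Real.rpow_mul hM] at h5
  have e3 : s / l * (l / s) = 1 := by field_simp
  have e4 : s * (l / s) = l := by field_simp
  rwa [e3, e4, Real.rpow_one] at h5

lemma HL_norm (𝕂 : Type*) [RCLike 𝕂] (p : ℝ) (hp : 1 < p) [Fact (1 ≤ ENNReal.ofReal p)]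
    (J : Finset ℕ) (x : ℕ → ℝ) (hx : ∀ j, 0 ≤ x j) :
    ‖∑ j ∈ J, ((x j : ℝ) : 𝕂) • (lp.single (E := fun _ : ℕ => 𝕂) (ENNReal.ofReal p) j 1)‖
      = (∑ j ∈ J, x j ^ p) ^ (1 / p) := by
  have hp' : (ENNReal.ofReal p).toReal = p := ENNReal.toReal_ofReal (by linarith)
  have h1 := lp.norm_sum_single (E := fun _ : ℕ => 𝕂) (p := ENNReal.ofReal p)
    (by rw [hp']; linarith) (fun j => ((x j : ℝ) : 𝕂)) J
  rw [hp'] at h1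
  have h2 : ∑ j ∈ J, ((x j : ℝ) : 𝕂) • (lp.single (E := fun _ : ℕ => 𝕂) (ENNReal.ofReal p) j 1)
      = ∑ j ∈ J, lp.single (E := fun _ : ℕ => 𝕂) (ENNReal.ofReal p) j ((x j : ℝ) : 𝕂) := by
    refine Finset.sum_congr rfl fun j _ => ?_
    rw [← lp.single_smul]; simp
  rw [h2]
  have h3 : ∑ j ∈ J, ‖((x j : ℝ) : 𝕂)‖ ^ p = ∑ j ∈ J, x j ^ p := by
    refine Finset.sum_congr rfl fun j _ => ?_
    rw [RCLike.norm_ofReal, abs_of_nonneg (hx j)]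
  rw [← h3, ← h1, ← Real.rpow_mul (norm_nonneg _), mul_one_div_cancel (by linarith), Real.rpow_one]

/-- **Hardy–Littlewood's Theorem 5 (1934).**
Let `p, q ∈ (1, ∞)` with `1/p + 1/q < 1` and let `q*` be the conjugate exponent
of `q`.  Then every bounded nonnegative bilinear form `A : ℓ_p × ℓ_q → 𝕂`
satisfies
`(Σ_{j₁} (Σ_{j₂} A(e_{j₁},e_{j₂})^{q*})^{(1/q*)·(1/(1−(1/p+1/q)))})^{1−(1/p+1/q)} ≤ ‖A‖`. -/
theorem hardy_littlewood_bilinear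
    (𝕂 : Type*) [RCLike 𝕂]
    (p q : ℝ) (hp : 1 < p) (hq : 1 < q)
    [Fact (1 ≤ ENNReal.ofReal p)] [Fact (1 ≤ ENNReal.ofReal q)]
    (h : 1 / p + 1 / q < 1)
    (qstar : ℝ) (hqstar : 1 / q + 1 / qstar = 1)
    (A : lp (fun _ : ℕ => 𝕂) (ENNReal.ofReal p) →L[𝕂]
         lp (fun _ : ℕ => 𝕂) (ENNReal.ofReal q) →L[𝕂] 𝕂)
    (hA : ∀ j₁ j₂ : ℕ, ∃ r : ℝ, 0 ≤ r ∧
      A (lp.single (ENNReal.ofReal p) j₁ 1) (lp.single (ENNReal.ofReal q) j₂ 1) = (r : 𝕂)) :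
    (∑' j₁ : ℕ,
        (∑' j₂ : ℕ,
            (ENNReal.ofReal (RCLike.re
              (A (lp.single (ENNReal.ofReal p) j₁ 1)
                 (lp.single (ENNReal.ofReal q) j₂ 1)))) ^ qstar)
          ^ ((1 / qstar) * (1 / (1 - (1 / p + 1 / q)))))
      ^ (1 - (1 / p + 1 / q)) ≤ ENNReal.ofReal ‖A‖ := by
  choose a ha hAa using hA
  simp only [hAa, RCLike.ofReal_re]
  have hqi : 1 / q < 1 := by rw [div_lt_one (by linarith)]; exact hq
  have hqi0 : 0 < 1 / q := by positivity
  have hs1 : 0 < 1 / qstar := by linarith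
  have hs0 : 0 < qstar := one_div_pos.mp hs1
  have hs : 1 < qstar := by
    have : 1 / qstar < 1 := by linarith
    rwa [div_lt_one hs0] at this
  set w := 1 - (1 / p + 1 / q) with hw
  have hw0 : 0 < w := by rw [hw]; linarith
  have hl : 0 < 1 / w := by positivity
  have core : ∀ J K : Finset ℕ,
      ∑ j ∈ J, (∑ k ∈ K, a j k ^ qstar) ^ (1 / qstar * (1 / w)) ≤ ‖A‖ ^ (1 / w) := by
    intro J K
    refine HL_core p q qstar (1 / w) hp hq hs hl hqstar (by rw [one_div_one_div, hw]; linarith)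
      J K a ha ‖A‖ A.opNorm_nonneg ?_
    intro x y hx hy
    rw [← HL_norm 𝕂 p hp J x hx, ← HL_norm 𝕂 q hq K y hy]
    refine le_trans ?_ (A.le_opNorm₂ _ _)
    have : A (∑ j ∈ J, ((x j : ℝ) : 𝕂) • (lp.single (E := fun _ : ℕ => 𝕂) (ENNReal.ofReal p) j 1))
        (∑ k ∈ K, ((y k : ℝ) : 𝕂) • (lp.single (E := fun _ : ℕ => 𝕂) (ENNReal.ofReal q) k 1))
        = ((∑ k ∈ K, (∑ j ∈ J, a j k * x j) * y k : ℝ) : 𝕂) := by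
      simp only [map_sum, map_smul, ContinuousLinearMap.sum_apply, ContinuousLinearMap.smul_apply,
        hAa, smul_eq_mul]
      push_cast
      refine Finset.sum_congr rfl fun k _ => ?_
      rw [mul_comm]
      congr 1
      exact Finset.sum_congr rfl fun j _ => mul_comm _ _
    rw [this, RCLike.norm_ofReal]
    exact le_abs_self _
  have coreE : ∀ J K : Finset ℕ,
      ∑ j ∈ J, (∑ k ∈ K, ENNReal.ofReal (a j k) ^ qstar) ^ (1 / qstar * (1 / w))
        ≤ ENNReal.ofReal ‖A‖ ^ (1 / w) := by
    intro J K
    have hb : ∀ j, 0 ≤ ∑ k ∈ K, a j k ^ qstar :=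
      fun j => Finset.sum_nonneg fun k _ => Real.rpow_nonneg (ha j k) _
    rw [ENNReal.ofReal_rpow_of_nonneg A.opNorm_nonneg hl.le]
    refine le_trans (le_of_eq ?_) (ENNReal.ofReal_le_ofReal (core J K))
    rw [ENNReal.ofReal_sum_of_nonneg fun j _ => Real.rpow_nonneg (hb j) _]
    refine Finset.sum_congr rfl fun j _ => ?_
    rw [← ENNReal.ofReal_rpow_of_nonneg (hb j) (by positivity),
      ENNReal.ofReal_sum_of_nonneg fun k _ => Real.rpow_nonneg (ha j k) _]
    congr 1
    exact Finset.sum_congr rfl fun k _ => ENNReal.ofReal_rpow_of_nonneg (ha j k) hs0.le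
  have key : ∑' j, (∑' k, ENNReal.ofReal (a j k) ^ qstar) ^ (1 / qstar * (1 / w))
      ≤ ENNReal.ofReal ‖A‖ ^ (1 / w) := by
    rw [ENNReal.tsum_eq_iSup_sum]
    refine iSup_le fun J => ?_
    have ht : Filter.Tendsto (fun K : Finset ℕ =>
        ∑ j ∈ J, (∑ k ∈ K, ENNReal.ofReal (a j k) ^ qstar) ^ (1 / qstar * (1 / w)))
        Filter.atTop
        (nhds (∑ j ∈ J, (∑' k, ENNReal.ofReal (a j k) ^ qstar) ^ (1 / qstar * (1 / w)))) := by
      refine tendsto_finsetSum J fun j _ => ?_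
      exact (ENNReal.continuous_rpow_const.tendsto _).comp ENNReal.summable.hasSum
    exact le_of_tendsto' ht (coreE J)
  refine (ENNReal.rpow_le_rpow key hw0.le).trans (le_of_eq ?_)
  rw [← ENNReal.rpow_mul, one_div_mul_cancel hw0.ne', ENNReal.rpow_one]
end

section
/- Let q ∈ (1, ∞). Then for every bounded bilinear form A : c₀ × ℓ_q → 𝕂 that is nonnegative (i.e., A(e_{j₁}, e_{j₂}) ≥ 0 for all j₁, j₂), one has ( Σ_{j₁=1}^∞ Σ_{j₂=1}^∞ A(e_{j₁}, e_{j₂})^{q*} )^{1/q*} ≤ ‖A‖. -/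
open scoped ENNReal ZeroAtInfty

noncomputable section

/-- The `j`-th standard unit vector in `c₀ = C₀(ℕ, 𝕂)`. -/
def c0Single (𝕂 : Type*) [RCLike 𝕂] (j : ℕ) : C₀(ℕ, 𝕂) :=
  ⟨⟨fun n => if n = j then 1 else 0, by continuity⟩, by
    have : HasCompactSupport (fun n : ℕ => if n = j then (1 : 𝕂) else 0) := by
      apply HasCompactSupport.intro (K := {j}) isCompact_singleton
      intro n hn
      simp only [Set.mem_singleton_iff] at hn
      simp [hn]
    exact this.is_zero_at_infty⟩

theorem c0_sum_norm_le (𝕂 : Type*) [RCLike 𝕂] (s : Finset ℕ) :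
    ‖∑ i ∈ s, c0Single 𝕂 i‖ ≤ 1 := by
  rw [← ZeroAtInftyContinuousMap.norm_toBCF_eq_norm]
  refine (BoundedContinuousFunction.norm_le zero_le_one).2 fun n => ?_
  have h1 : (∑ i ∈ s, c0Single 𝕂 i).toBCF n = ∑ i ∈ s, (if n = i then (1 : 𝕂) else 0) := by
    change (∑ i ∈ s, c0Single 𝕂 i) n = _
    induction s using Finset.induction_on with
    | empty => simp
    | insert a s ha ih =>
      rw [Finset.sum_insert ha, Finset.sum_insert ha, ZeroAtInftyContinuousMap.add_apply, ih]
      rfl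
  rw [h1, Finset.sum_ite_eq]
  split_ifs <;> simp

theorem hl_finite (𝕂 : Type*) [RCLike 𝕂]
    (q : ℝ) (hq : 1 < q) [Fact (1 ≤ ENNReal.ofReal q)]
    (p : ℝ) (hpq : q.HolderConjugate p)
    (A : C₀(ℕ, 𝕂) →L[𝕂] lp (fun _ : ℕ => 𝕂) (ENNReal.ofReal q) →L[𝕂] 𝕂)
    (a : ℕ → ℕ → ℝ) (ha : ∀ i j, 0 ≤ a i j)
    (hA : ∀ i j : ℕ, A (c0Single 𝕂 i) (lp.single (ENNReal.ofReal q) j 1) = (a i j : 𝕂))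
    (s t : Finset ℕ) :
    ∑ j ∈ t, ∑ i ∈ s, a i j ^ p ≤ ‖A‖ ^ p := by
  have hp : 1 < p := hpq.symm.lt
  have hp0 : 0 < p := by linarith
  have hq0 : 0 < q := by linarith
  have hqr : (ENNReal.ofReal q).toReal = q := ENNReal.toReal_ofReal hq0.le
  set b : ℕ → ℝ := fun j => ∑ i ∈ s, a i j with hb
  have hb0 : ∀ j, 0 ≤ b j := fun j => Finset.sum_nonneg fun i _ => ha i j
  have hmul : ∀ x : ℝ, 0 ≤ x → x * x ^ (p - 1) = x ^ p := by
    intro x hx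
    rcases hx.eq_or_lt with h | h
    · rw [← h, Real.zero_rpow hp0.ne', zero_mul]
    · rw [Real.rpow_sub_one h.ne']; field_simp
  set S : ℝ := ∑ j ∈ t, b j ^ p with hS
  have hS0 : 0 ≤ S := Finset.sum_nonneg fun j _ => Real.rpow_nonneg (hb0 j) _
  have h1 : ∑ j ∈ t, ∑ i ∈ s, a i j ^ p ≤ S := by
    refine Finset.sum_le_sum fun j _ => ?_
    rw [← hmul _ (hb0 j)]
    simp only [hb]
    rw [Finset.sum_mul]
    refine Finset.sum_le_sum fun i hi => ?_
    rw [← hmul _ (ha i j)]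
    refine mul_le_mul_of_nonneg_left ?_ (ha i j)
    exact Real.rpow_le_rpow (ha i j)
      (Finset.single_le_sum (f := fun i => a i j) (fun i _ => ha i j) hi) (by linarith)
  refine h1.trans ?_
  set y : lp (fun _ : ℕ => 𝕂) (ENNReal.ofReal q) :=
    ∑ j ∈ t, lp.single (ENNReal.ofReal q) j (((b j ^ (p - 1) : ℝ)) : 𝕂) with hy
  have hyn : ‖y‖ ^ q = S := by
    have := lp.norm_sum_single (p := ENNReal.ofReal q) (E := fun _ : ℕ => 𝕂)
      (by rw [hqr]; exact hq0) (fun j => (((b j ^ (p - 1) : ℝ)) : 𝕂)) t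
    rw [hqr] at this
    rw [hy, this, hS]
    refine Finset.sum_congr rfl fun j _ => ?_
    rw [RCLike.norm_ofReal, abs_of_nonneg (Real.rpow_nonneg (hb0 j) _),
      ← Real.rpow_mul (hb0 j), hpq.symm.sub_one_mul_conj]
  have hAy : A (∑ i ∈ s, c0Single 𝕂 i) y = ((S : ℝ) : 𝕂) := by
    have hs : ∀ j (c : 𝕂), (lp.single (ENNReal.ofReal q) j c : lp (fun _ : ℕ => 𝕂) _)
        = c • lp.single (ENNReal.ofReal q) j (1 : 𝕂) := by
      intro j c
      rw [← lp.single_smul, smul_eq_mul, mul_one]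
    rw [hy, map_sum, hS, RCLike.ofReal_sum]
    refine Finset.sum_congr rfl fun j _ => ?_
    rw [hs, map_smul, map_sum, ContinuousLinearMap.sum_apply]
    simp only [hA]
    rw [← RCLike.ofReal_sum, smul_eq_mul, ← RCLike.ofReal_mul, mul_comm, hmul _ (hb0 j)]
  have hle : S ≤ ‖A‖ * ‖y‖ := by
    have h2 := A.le_opNorm₂ (∑ i ∈ s, c0Single 𝕂 i) y
    rw [hAy, RCLike.norm_ofReal, abs_of_nonneg hS0] at h2
    refine h2.trans (mul_le_mul_of_nonneg_right ?_ (norm_nonneg _))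
    exact mul_le_of_le_one_right A.opNorm_nonneg (c0_sum_norm_le 𝕂 s)
  have hyS : ‖y‖ = S ^ (1 / q) := by
    rw [← hyn, one_div, Real.rpow_rpow_inv (norm_nonneg _) hq0.ne']
  rcases hS0.eq_or_lt with h | h
  · rw [← h]; positivity
  have hle2 : S ^ (1 / p) ≤ ‖A‖ := by
    have h3 : S ^ (1 / p) * S ^ (1 / q) = S := by
      rw [← Real.rpow_add h, one_div, one_div, add_comm, hpq.inv_add_inv_eq_one, Real.rpow_one]
    rw [hyS] at hle
    refine le_of_mul_le_mul_right ?_ (Real.rpow_pos_of_pos h (1 / q))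
    rw [h3]; exact hle
  calc S = (S ^ (1 / p)) ^ p := by rw [one_div, Real.rpow_inv_rpow hS0 hp0.ne']
    _ ≤ ‖A‖ ^ p := Real.rpow_le_rpow (Real.rpow_nonneg hS0 _) hle2 hp0.le

/-- **Hardy–Littlewood's Theorem 5, endpoint case `p = ∞`.**
Let `q ∈ (1, ∞)` and let `q*` be the conjugate exponent of `q`.  Then every
bounded nonnegative bilinear form `A : c₀ × ℓ_q → 𝕂` satisfies
`(Σ_{j₁} Σ_{j₂} A(e_{j₁},e_{j₂})^{q*})^{1/q*} ≤ ‖A‖`. -/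
theorem hardy_littlewood_bilinear_c0
    (𝕂 : Type*) [RCLike 𝕂]
    (q : ℝ) (hq : 1 < q) [Fact (1 ≤ ENNReal.ofReal q)]
    (qstar : ℝ) (hqstar : 1 / q + 1 / qstar = 1)
    (A : C₀(ℕ, 𝕂) →L[𝕂] lp (fun _ : ℕ => 𝕂) (ENNReal.ofReal q) →L[𝕂] 𝕂)
    (hA : ∀ j₁ j₂ : ℕ, ∃ r : ℝ, 0 ≤ r ∧
      A (c0Single 𝕂 j₁) (lp.single (ENNReal.ofReal q) j₂ 1) = (r : 𝕂)) :
    (∑' j₁ : ℕ, ∑' j₂ : ℕ,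
        (ENNReal.ofReal (RCLike.re
          (A (c0Single 𝕂 j₁) (lp.single (ENNReal.ofReal q) j₂ 1)))) ^ qstar)
      ^ (1 / qstar) ≤ ENNReal.ofReal ‖A‖ := by
  have hpq : q.HolderConjugate qstar :=
    Real.holderConjugate_iff.2 ⟨hq, by simpa only [one_div] using hqstar⟩
  have hp0 : 0 < qstar := hpq.symm.pos
  choose a ha hAa using hA
  have key := hl_finite 𝕂 q hq qstar hpq A a ha hAa
  simp only [hAa, RCLike.ofReal_re]
  have main : (∑' j₁ : ℕ, ∑' j₂ : ℕ, ENNReal.ofReal (a j₁ j₂) ^ qstar)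
      ≤ ENNReal.ofReal ‖A‖ ^ qstar := by
    rw [ENNReal.tsum_eq_iSup_sum]
    refine iSup_le fun s => ?_
    rw [← Summable.tsum_finsetSum (fun _ _ => ENNReal.summable), ENNReal.tsum_eq_iSup_sum]
    refine iSup_le fun t => ?_
    rw [ENNReal.ofReal_rpow_of_nonneg A.opNorm_nonneg hp0.le]
    refine le_trans (le_of_eq ?_) (ENNReal.ofReal_le_ofReal (key s t))
    rw [ENNReal.ofReal_sum_of_nonneg
      (fun j _ => Finset.sum_nonneg fun i _ => Real.rpow_nonneg (ha i j) _)]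
    refine Finset.sum_congr rfl fun j _ => ?_
    rw [ENNReal.ofReal_sum_of_nonneg (fun i _ => Real.rpow_nonneg (ha i j) _)]
    exact Finset.sum_congr rfl fun i _ => ENNReal.ofReal_rpow_of_nonneg (ha i j) hp0.le
  rw [one_div]
  exact ENNReal.rpow_inv_le_iff hp0 |>.2 main
end
end

section
/- Let p, q ∈ (1, ∞) satisfy 1/p + 1/q < 1 and let q₁, q₂ ∈ (0, ∞). Suppose that ( Σ_{j₁=1}^∞ ( Σ_{j₂=1}^∞ A(e_{j₁}, e_{j₂})^{q₂} )^{q₁/q₂} )^{1/q₁} ≤ ‖A‖ holds for every bounded nonnegative bilinear form A : ℓ_p × ℓ_q → 𝕂. Then q₁ ≥ 1/(1 − (1/p + 1/q)) and q₂ ≥ q*. -/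
open scoped ENNReal

namespace HLAux

lemma hold2 {α β γ : ℝ} (hα : 0 ≤ α) (hβ : 0 ≤ β) (hγ : 0 ≤ γ) (hs : α + β + γ = 1)
    {X0 X1 Y0 Y1 : ℝ} (hX0 : 0 ≤ X0) (hX1 : 0 ≤ X1) (hY0 : 0 ≤ Y0) (hY1 : 0 ≤ Y1)
    (hX : X0 + X1 ≤ 1) (hY : Y0 + Y1 ≤ 1) :
    X0 ^ α * Y0 ^ β + X1 ^ α * Y1 ^ β ≤ (2 : ℝ) ^ γ := by
  have h0 := Real.geom_mean_le_arith_mean3_weighted hα hβ hγ hX0 hY0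
    (by norm_num : (0:ℝ) ≤ 1/2) hs
  have h1 := Real.geom_mean_le_arith_mean3_weighted hα hβ hγ hX1 hY1
    (by norm_num : (0:ℝ) ≤ 1/2) hs
  have hle : (X0 ^ α * Y0 ^ β + X1 ^ α * Y1 ^ β) * (1/2 : ℝ) ^ γ ≤ 1 := by
    nlinarith [mul_le_mul_of_nonneg_left hX hα, mul_le_mul_of_nonneg_left hY hβ]
  have h2 : (1/2 : ℝ) ^ γ = ((2:ℝ) ^ γ)⁻¹ := by
    rw [one_div, Real.inv_rpow (by norm_num)]
  rw [h2, ← div_eq_mul_inv, div_le_one (by positivity)] at hle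
  exact hle

section
variable {𝕂 : Type*} [RCLike 𝕂]

lemma unit_coords {p : ℝ} (hp : 1 < p) [Fact (1 ≤ ENNReal.ofReal p)]
    (x : lp (fun _ : ℕ => 𝕂) (ENNReal.ofReal p)) (hx : x ≠ 0) :
    (‖x 0‖ / ‖x‖) ^ p + (‖x 1‖ / ‖x‖) ^ p ≤ 1 := by
  have hpp : (ENNReal.ofReal p).toReal = p := ENNReal.toReal_ofReal (by linarith)
  have h := lp.sum_rpow_le_norm_rpow (p := ENNReal.ofReal p) (by rw [hpp]; linarith) x
    (Finset.range 2)
  rw [hpp] at h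
  simp only [Finset.sum_range_succ, Finset.sum_range_zero, zero_add] at h
  have hn : 0 < ‖x‖ := norm_pos_iff.mpr hx
  rw [Real.div_rpow (norm_nonneg _) hn.le, Real.div_rpow (norm_nonneg _) hn.le, ← add_div,
    div_le_one (by positivity)]
  exact h

/-- coordinate functional -/
noncomputable def coord (p : ℝ) [Fact (1 ≤ ENNReal.ofReal p)] (j : ℕ) :
    lp (fun _ : ℕ => 𝕂) (ENNReal.ofReal p) →L[𝕂] 𝕂 :=
  LinearMap.mkContinuous
    { toFun := fun x => x j
      map_add' := fun _ _ => rfl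
      map_smul' := fun _ _ => rfl } 1 (fun x => by
        rw [one_mul]
        exact lp.norm_apply_le_norm
          (ne_of_gt (lt_of_lt_of_le zero_lt_one (Fact.out : 1 ≤ ENNReal.ofReal p))) x j)

lemma coord_apply (p : ℝ) [Fact (1 ≤ ENNReal.ofReal p)] (j : ℕ)
    (x : lp (fun _ : ℕ => 𝕂) (ENNReal.ofReal p)) : coord p j x = x j := rfl

lemma coord_single (p : ℝ) [Fact (1 ≤ ENNReal.ofReal p)] (j i : ℕ) :
    coord (𝕂 := 𝕂) p j (lp.single (ENNReal.ofReal p) i 1) = if j = i then 1 else 0 := by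
  rw [coord_apply, lp.single_apply, Pi.single_apply]

noncomputable def A1 (p q : ℝ) [Fact (1 ≤ ENNReal.ofReal p)] [Fact (1 ≤ ENNReal.ofReal q)] :
    lp (fun _ : ℕ => 𝕂) (ENNReal.ofReal p) →L[𝕂]
      lp (fun _ : ℕ => 𝕂) (ENNReal.ofReal q) →L[𝕂] 𝕂 :=
  (coord p 0).smulRight (coord q 0) + (coord p 1).smulRight (coord q 1)

noncomputable def A2 (p q : ℝ) [Fact (1 ≤ ENNReal.ofReal p)] [Fact (1 ≤ ENNReal.ofReal q)] :
    lp (fun _ : ℕ => 𝕂) (ENNReal.ofReal p) →L[𝕂]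
      lp (fun _ : ℕ => 𝕂) (ENNReal.ofReal q) →L[𝕂] 𝕂 :=
  (coord p 0).smulRight (coord q 0 + coord q 1)

lemma A1_norm {p q : ℝ} (hp : 1 < p) (hq : 1 < q)
    [Fact (1 ≤ ENNReal.ofReal p)] [Fact (1 ≤ ENNReal.ofReal q)] (h : 1 / p + 1 / q < 1) :
    ‖A1 (𝕂 := 𝕂) p q‖ ≤ (2:ℝ) ^ (1 - (1 / p + 1 / q)) := by
  refine ContinuousLinearMap.opNorm_le_bound₂ _ (by positivity) fun x y => ?_
  by_cases hx : x = 0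
  · simp [hx]
  by_cases hy : y = 0
  · simp [hy]
  have hxn : 0 < ‖x‖ := norm_pos_iff.mpr hx
  have hyn : 0 < ‖y‖ := norm_pos_iff.mpr hy
  have key := hold2 (α := 1/p) (β := 1/q) (γ := 1 - (1/p+1/q)) (by positivity) (by positivity)
    (by linarith) (by ring) (by positivity) (by positivity) (by positivity) (by positivity)
    (unit_coords hp x hx) (unit_coords hq y hy)
  have e : ∀ {a r : ℝ}, 0 ≤ a → 1 < r → (a ^ r) ^ (1 / r) = a := fun ha hr => by
    rw [one_div, Real.rpow_rpow_inv ha (by linarith)]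
  rw [e (by positivity) hp, e (by positivity) hp, e (by positivity) hq, e (by positivity) hq] at key
  have e2 : A1 p q x y = x 0 * y 0 + x 1 * y 1 := rfl
  rw [e2]
  calc ‖x 0 * y 0 + x 1 * y 1‖ ≤ ‖x 0‖ * ‖y 0‖ + ‖x 1‖ * ‖y 1‖ := by
        simpa only [norm_mul] using norm_add_le (x 0 * y 0) (x 1 * y 1)
    _ = (‖x 0‖ / ‖x‖ * (‖y 0‖ / ‖y‖) + ‖x 1‖ / ‖x‖ * (‖y 1‖ / ‖y‖)) * ‖x‖ * ‖y‖ := by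
        field_simp
    _ ≤ _ := by gcongr

lemma A2_norm {p q : ℝ} (hp : 1 < p) (hq : 1 < q)
    [Fact (1 ≤ ENNReal.ofReal p)] [Fact (1 ≤ ENNReal.ofReal q)] :
    ‖A2 (𝕂 := 𝕂) p q‖ ≤ (2:ℝ) ^ (1 - 1 / q) := by
  refine ContinuousLinearMap.opNorm_le_bound₂ _ (by positivity) fun x y => ?_
  by_cases hy : y = 0
  · simp [hy]
  have hyn : 0 < ‖y‖ := norm_pos_iff.mpr hy
  have hq1 : 1 / q < 1 := by rw [div_lt_one (by linarith)]; exact hq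
  have key := hold2 (α := 0) (β := 1/q) (γ := 1 - 1/q) le_rfl (by positivity)
    (by linarith) (by ring) (X0 := 0) (X1 := 0) le_rfl le_rfl (by positivity) (by positivity)
    (by norm_num) (unit_coords hq y hy)
  have e : ∀ {a r : ℝ}, 0 ≤ a → 1 < r → (a ^ r) ^ (1 / r) = a := fun ha hr => by
    rw [one_div, Real.rpow_rpow_inv ha (by linarith)]
  rw [e (by positivity) hq, e (by positivity) hq, Real.rpow_zero, one_mul, one_mul] at key
  have e2 : A2 p q x y = x 0 * (y 0 + y 1) := rfl
  have hx0 : ‖x 0‖ ≤ ‖x‖ := lp.norm_apply_le_norm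
    (ne_of_gt (lt_of_lt_of_le zero_lt_one (Fact.out : 1 ≤ ENNReal.ofReal p))) x 0
  rw [e2, norm_mul]
  calc ‖x 0‖ * ‖y 0 + y 1‖ ≤ ‖x‖ * (‖y 0‖ + ‖y 1‖) := by
        gcongr; exact norm_add_le _ _
    _ = (‖y 0‖ / ‖y‖ + ‖y 1‖ / ‖y‖) * ‖x‖ * ‖y‖ := by
        field_simp
    _ ≤ _ := by gcongr

lemma A1_single (p q : ℝ) [Fact (1 ≤ ENNReal.ofReal p)] [Fact (1 ≤ ENNReal.ofReal q)] (i j : ℕ) :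
    A1 (𝕂 := 𝕂) p q (lp.single (ENNReal.ofReal p) i 1) (lp.single (ENNReal.ofReal q) j 1)
      = (((if i = j ∧ i < 2 then 1 else 0 : ℝ)) : 𝕂) := by
  have e2 : ∀ x y, A1 (𝕂 := 𝕂) p q x y = coord p 0 x * coord q 0 y + coord p 1 x * coord q 1 y :=
    fun _ _ => rfl
  rw [e2]
  simp only [coord_single]
  rcases i with _ | _ | i <;> rcases j with _ | _ | j <;> simp

lemma A2_single (p q : ℝ) [Fact (1 ≤ ENNReal.ofReal p)] [Fact (1 ≤ ENNReal.ofReal q)] (i j : ℕ) :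
    A2 (𝕂 := 𝕂) p q (lp.single (ENNReal.ofReal p) i 1) (lp.single (ENNReal.ofReal q) j 1)
      = (((if i = 0 ∧ j < 2 then 1 else 0 : ℝ)) : 𝕂) := by
  have e2 : ∀ x y, A2 (𝕂 := 𝕂) p q x y = coord p 0 x * (coord q 0 y + coord q 1 y) :=
    fun _ _ => rfl
  rw [e2]
  simp only [coord_single]
  rcases i with _ | i <;> rcases j with _ | _ | j <;> simp

end

lemma two_exp {a b : ℝ} {N : ℝ} (ha : (2 : ℝ≥0∞) ^ a ≤ ENNReal.ofReal N) (hN : N ≤ (2:ℝ) ^ b) :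
    a ≤ b := by
  have h := ha.trans (ENNReal.ofReal_le_ofReal hN)
  rw [← ENNReal.ofReal_rpow_of_pos (by norm_num)] at h
  have e : ENNReal.ofReal 2 = 2 := by simp
  rw [e, ← ENNReal.ofReal_ofNat 2, ENNReal.ofReal_rpow_of_pos (by norm_num),
    ENNReal.ofReal_rpow_of_pos (by norm_num), ENNReal.ofReal_le_ofReal_iff (by positivity)] at h
  exact (Real.rpow_le_rpow_left_iff (by norm_num)).mp h

lemma sum1 {q₁ q₂ : ℝ} (hq₁ : 0 < q₁) (hq₂ : 0 < q₂) :
    (∑' i : ℕ, (∑' j : ℕ, (ENNReal.ofReal (if i = j ∧ i < 2 then 1 else 0 : ℝ)) ^ q₂) ^ (q₁ / q₂))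
      = 2 := by
  have hin : ∀ i : ℕ, (∑' j : ℕ, (ENNReal.ofReal (if i = j ∧ i < 2 then 1 else 0 : ℝ)) ^ q₂)
      = if i < 2 then 1 else 0 := by
    intro i
    rw [tsum_eq_single i]
    · split_ifs <;> simp_all
    · intro j hj
      rw [if_neg (fun hh => hj hh.1.symm)]
      simp [hq₂]
  simp only [hin]
  rw [tsum_eq_sum (s := Finset.range 2)]
  · simp [Finset.sum_range_succ]; norm_num
  · intro i hi
    rw [if_neg (by simpa using hi)]
    exact ENNReal.zero_rpow_of_pos (by positivity)

lemma sum2 {q₁ q₂ : ℝ} (hq₁ : 0 < q₁) (hq₂ : 0 < q₂) :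
    (∑' i : ℕ, (∑' j : ℕ, (ENNReal.ofReal (if i = 0 ∧ j < 2 then 1 else 0 : ℝ)) ^ q₂) ^ (q₁ / q₂))
      = 2 ^ (q₁ / q₂) := by
  rw [tsum_eq_single 0]
  · congr 1
    rw [tsum_eq_sum (s := Finset.range 2)]
    · simp [Finset.sum_range_succ]; norm_num
    · intro j hj
      rw [if_neg (by simpa using hj)]
      simp [hq₂]
  · intro i hi
    simp only [hi, false_and, if_false, ENNReal.ofReal_zero, ENNReal.zero_rpow_of_pos hq₂,
      tsum_zero]
    exact ENNReal.zero_rpow_of_pos (by positivity)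

end HLAux

/-- **Optimality of the exponents in Hardy–Littlewood's Theorem 5.**
Let `p, q ∈ (1, ∞)` with `1/p + 1/q < 1` and let `q₁, q₂ ∈ (0, ∞)`.  If
`(Σ_{j₁} (Σ_{j₂} A(e_{j₁},e_{j₂})^{q₂})^{q₁/q₂})^{1/q₁} ≤ ‖A‖` holds for every
bounded nonnegative bilinear form `A : ℓ_p × ℓ_q → 𝕂`, then
`q₁ ≥ 1/(1 − (1/p + 1/q))` and `q₂ ≥ q*`, where `q*` is the conjugate exponent
of `q`. -/
theorem hardy_littlewood_bilinear_optimality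
    (𝕂 : Type*) [RCLike 𝕂]
    (p q : ℝ) (hp : 1 < p) (hq : 1 < q)
    [Fact (1 ≤ ENNReal.ofReal p)] [Fact (1 ≤ ENNReal.ofReal q)]
    (h : 1 / p + 1 / q < 1)
    (qstar : ℝ) (hqstar : 1 / q + 1 / qstar = 1)
    (q₁ q₂ : ℝ) (hq₁ : 0 < q₁) (hq₂ : 0 < q₂)
    (H : ∀ A : lp (fun _ : ℕ => 𝕂) (ENNReal.ofReal p) →L[𝕂]
          lp (fun _ : ℕ => 𝕂) (ENNReal.ofReal q) →L[𝕂] 𝕂,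
      (∀ j₁ j₂ : ℕ, ∃ r : ℝ, 0 ≤ r ∧
        A (lp.single (ENNReal.ofReal p) j₁ 1) (lp.single (ENNReal.ofReal q) j₂ 1) = (r : 𝕂)) →
      (∑' j₁ : ℕ,
          (∑' j₂ : ℕ,
              (ENNReal.ofReal (RCLike.re
                (A (lp.single (ENNReal.ofReal p) j₁ 1)
                   (lp.single (ENNReal.ofReal q) j₂ 1)))) ^ q₂)
            ^ (q₁ / q₂))
        ^ (1 / q₁) ≤ ENNReal.ofReal ‖A‖) :
    1 / (1 - (1 / p + 1 / q)) ≤ q₁ ∧ qstar ≤ q₂ := by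
  have hs : 0 < 1 - (1 / p + 1 / q) := by linarith
  constructor
  · have h1 := H (HLAux.A1 p q) (fun i j => ⟨_, by split_ifs <;> norm_num, HLAux.A1_single p q i j⟩)
    simp only [HLAux.A1_single, RCLike.ofReal_re] at h1
    rw [HLAux.sum1 hq₁ hq₂] at h1
    have h2 := HLAux.two_exp h1 (HLAux.A1_norm hp hq h)
    rw [div_le_iff₀ hs]
    rw [div_le_iff₀ hq₁] at h2
    linarith
  · have h1 := H (HLAux.A2 p q) (fun i j => ⟨_, by split_ifs <;> norm_num, HLAux.A2_single p q i j⟩)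
    simp only [HLAux.A2_single, RCLike.ofReal_re] at h1
    rw [HLAux.sum2 hq₁ hq₂, ← ENNReal.rpow_mul,
      show q₁ / q₂ * (1 / q₁) = 1 / q₂ by field_simp] at h1
    have h2 := HLAux.two_exp h1 (HLAux.A2_norm hp hq)
    have h3 : 1 / q₂ ≤ 1 / qstar := by linarith
    have h4 : 0 < 1 / q₂ := by positivity
    have h5 : 0 < qstar := one_div_pos.mp (lt_of_lt_of_le h4 h3)
    exact (one_div_le_one_div hq₂ h5).mp h3
end

section
/- Let m be a positive integer and p₁, …, p_m ∈ (1, ∞) with 1/p₁ + ⋯ + 1/p_m < 1, and let ρ ∈ (0, ∞) satisfy ρ ≥ 1/(1 − (1/p₁ + ⋯ + 1/p_m)). Then for every bounded nonnegative m-linear form A : ℓ_{p₁} × ⋯ × ℓ_{p_m} → 𝕂 one has ( Σ_{j₁,…,j_m=1}^∞ A(e_{j₁}, …, e_{j_m})^{ρ} )^{1/ρ} ≤ ‖A‖. -/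
open scoped ENNReal

theorem box_bound
    (𝕂 : Type*) [RCLike 𝕂] (m : ℕ)
    (p : Fin m → ℝ) (hp : ∀ i, 1 < p i)
    [∀ i, Fact (1 ≤ ENNReal.ofReal (p i))]
    (hsum : ∑ i, 1 / p i < 1)
    (ρ : ℝ) (hρ : 0 < ρ) (hρ' : 1 / (1 - ∑ i, 1 / p i) ≤ ρ)
    (A : ContinuousMultilinearMap 𝕂
      (fun i : Fin m => lp (fun _ : ℕ => 𝕂) (ENNReal.ofReal (p i))) 𝕂)
    (a : (Fin m → ℕ) → ℝ) (ha0 : ∀ j, 0 ≤ a j)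
    (haA : ∀ j, A (fun i => lp.single (ENNReal.ofReal (p i)) (j i) 1) = (a j : 𝕂)) (N : ℕ) :
    ∑ j ∈ Fintype.piFinset (fun _ : Fin m => Finset.range N), a j ^ ρ ≤ ‖A‖ ^ ρ := by
  classical
  have hp0 : ∀ i, 0 < p i := fun i => by linarith [hp i]
  have htr : ∀ i, (ENNReal.ofReal (p i)).toReal = p i := fun i => ENNReal.toReal_ofReal (hp0 i).le
  set σ := ∑ i, 1 / p i with hσ
  have hσ0 : 0 ≤ σ := Finset.sum_nonneg fun i _ => (one_div_pos.2 (hp0 i)).le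
  have hρσ : 1 + ρ * σ ≤ ρ := by
    rw [div_le_iff₀ (by linarith)] at hρ'; linarith
  set B := Fintype.piFinset (fun _ : Fin m => Finset.range N) with hB
  set S := ∑ j ∈ B, a j ^ ρ with hS
  have hpow0 : ∀ j, 0 ≤ a j ^ ρ := fun j => Real.rpow_nonneg (ha0 j) _
  have hS0 : 0 ≤ S := Finset.sum_nonneg fun j _ => hpow0 j
  rcases hS0.eq_or_lt with h0 | hSpos
  · rw [← h0]; positivity
  let c : Fin m → ℕ → ℝ := fun i k => (∑ j ∈ B with j i = k, a j ^ ρ) ^ (1 / p i)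
  have hin0 : ∀ i k, 0 ≤ ∑ j ∈ B with j i = k, a j ^ ρ :=
    fun i k => Finset.sum_nonneg fun j _ => hpow0 j
  have hc0 : ∀ i k, 0 ≤ c i k := fun i k => Real.rpow_nonneg (hin0 i k) _
  let x : ∀ i : Fin m, lp (fun _ : ℕ => 𝕂) (ENNReal.ofReal (p i)) :=
    fun i => ∑ k ∈ Finset.range N, lp.single (ENNReal.ofReal (p i)) k (c i k : 𝕂)
  have hx : ∀ i, ‖x i‖ = S ^ (1 / p i) := by
    intro i
    have h := lp.norm_sum_single (p := ENNReal.ofReal (p i)) (by rw [htr]; exact hp0 i)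
      (fun k => (c i k : 𝕂)) (Finset.range N)
    rw [htr] at h
    have h2 : ‖x i‖ ^ p i = S := by
      rw [h]
      have : ∀ k, ‖(c i k : 𝕂)‖ ^ p i = ∑ j ∈ B with j i = k, a j ^ ρ := by
        intro k
        rw [RCLike.norm_ofReal, abs_of_nonneg (hc0 i k)]
        simp only [c]
        rw [← Real.rpow_mul (hin0 i k), one_div_mul_cancel (hp0 i).ne', Real.rpow_one]
      simp_rw [this]
      exact Finset.sum_fiberwise_of_maps_to (s := B) (t := Finset.range N) (g := fun j : Fin m → ℕ => j i)
        (fun j hj => (Fintype.mem_piFinset.1 (hB ▸ hj)) i) _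
    rw [← h2, ← Real.rpow_mul (norm_nonneg _), mul_one_div_cancel (hp0 i).ne', Real.rpow_one]
  have hAx : A x = ((∑ j ∈ B, (∏ i, c i (j i)) * a j : ℝ) : 𝕂) := by
    simp only [x]
    have := A.toMultilinearMap.map_sum_finset
      (α := fun _ => ℕ)
      (fun i (k : ℕ) => lp.single (E := fun _ : ℕ => 𝕂) (ENNReal.ofReal (p i)) k (c i k : 𝕂))
      (fun _ => Finset.range N)
    simp only [ContinuousMultilinearMap.coe_coe] at this
    rw [this]
    push_cast
    refine Finset.sum_congr rfl fun j _ => ?_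
    have h1 : (fun i => lp.single (E := fun _ : ℕ => 𝕂) (ENNReal.ofReal (p i)) (j i) (c i (j i) : 𝕂))
       = fun i => (c i (j i) : 𝕂) • lp.single (E := fun _ : ℕ => 𝕂) (ENNReal.ofReal (p i)) (j i) (1 : 𝕂) := by
      funext i
      rw [← lp.single_smul]; simp
    rw [h1, A.map_smul_univ, haA]; simp
  have hlow : ∀ j ∈ B, a j ^ (1 + ρ * σ) ≤ (∏ i, c i (j i)) * a j := by
    intro j hj
    rw [Real.rpow_add_of_nonneg (ha0 j) zero_le_one (by positivity), Real.rpow_one, mul_comm]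
    refine mul_le_mul_of_nonneg_right ?_ (ha0 j)
    rw [Real.rpow_mul (ha0 j), hσ, Real.rpow_sum_of_nonneg (hpow0 j) (fun i _ => (one_div_pos.2 (hp0 i)).le)]
    refine Finset.prod_le_prod (fun i _ => Real.rpow_nonneg (hpow0 j) _) fun i _ => ?_
    refine Real.rpow_le_rpow (hpow0 j) ?_ (one_div_pos.2 (hp0 i)).le
    exact Finset.single_le_sum (f := fun j => a j ^ ρ) (fun j _ => hpow0 j)
      (Finset.mem_filter.2 ⟨hj, rfl⟩)
  have hup : ∑ j ∈ B, (∏ i, c i (j i)) * a j ≤ ‖A‖ * S ^ σ := by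
    have h := A.le_opNorm x
    rw [hAx, RCLike.norm_ofReal] at h
    simp_rw [hx] at h
    rw [← Real.rpow_sum_of_pos hSpos] at h
    exact (le_abs_self _).trans h
  have haN : ∀ j, a j ≤ ‖A‖ := by
    intro j
    have h := A.le_opNorm (fun i => lp.single (ENNReal.ofReal (p i)) (j i) 1)
    rw [haA, RCLike.norm_ofReal, abs_of_nonneg (ha0 j)] at h
    have h1 : ∀ i, ‖lp.single (E := fun _ : ℕ => 𝕂) (ENNReal.ofReal (p i)) (j i) (1 : 𝕂)‖ = 1 := by
      intro i
      rw [lp.norm_single (by simpa using hp0 i)]; simp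
    simpa [h1] using h
  have hfin : S ≤ ‖A‖ ^ (ρ - ρ * σ) * S ^ σ := by
    calc S ≤ ∑ j ∈ B, ‖A‖ ^ (ρ - (1 + ρ * σ)) * a j ^ (1 + ρ * σ) := by
          refine Finset.sum_le_sum fun j _ => ?_
          have : ρ = (ρ - (1 + ρ * σ)) + (1 + ρ * σ) := by ring
          conv_lhs => rw [this]
          rw [Real.rpow_add_of_nonneg (ha0 j) (by linarith) (by positivity)]
          exact mul_le_mul_of_nonneg_right
            (Real.rpow_le_rpow (ha0 j) (haN j) (by linarith)) (Real.rpow_nonneg (ha0 j) _)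
      _ = ‖A‖ ^ (ρ - (1 + ρ * σ)) * ∑ j ∈ B, a j ^ (1 + ρ * σ) := (Finset.mul_sum _ _ _).symm
      _ ≤ ‖A‖ ^ (ρ - (1 + ρ * σ)) * (‖A‖ * S ^ σ) := by
          gcongr
          exact (Finset.sum_le_sum hlow).trans hup
      _ = ‖A‖ ^ (ρ - ρ * σ) * S ^ σ := by
          have : ρ - ρ * σ = (ρ - (1 + ρ * σ)) + 1 := by ring
          rw [this, Real.rpow_add_of_nonneg (norm_nonneg _) (by linarith) zero_le_one,
            Real.rpow_one, mul_assoc]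
  have h1 : S ^ (1 - σ) ≤ (‖A‖ ^ ρ) ^ (1 - σ) := by
    rw [← Real.rpow_mul (norm_nonneg _), mul_sub, mul_one, Real.rpow_sub hSpos, Real.rpow_one,
      div_le_iff₀ (Real.rpow_pos_of_pos hSpos _)]
    exact hfin
  exact (Real.rpow_le_rpow_iff hS0 (by positivity) (by linarith)).1 h1

/-- **Bayart's Hardy–Littlewood inequality for positive multilinear forms
(sufficiency of the exponent).**
Let `m ≥ 1`, `p₁, …, p_m ∈ (1, ∞)` with `1/p₁ + ⋯ + 1/p_m < 1`, and let
`ρ ∈ (0, ∞)` satisfy `ρ ≥ 1/(1 − (1/p₁ + ⋯ + 1/p_m))`.  Then every bounded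
nonnegative `m`-linear form `A : ℓ_{p₁} × ⋯ × ℓ_{p_m} → 𝕂` satisfies
`(Σ_{j₁,…,j_m} A(e_{j₁},…,e_{j_m})^ρ)^{1/ρ} ≤ ‖A‖`. -/
theorem positive_hardy_littlewood_sufficiency
    (𝕂 : Type*) [RCLike 𝕂] (m : ℕ) (hm : 0 < m)
    (p : Fin m → ℝ) (hp : ∀ i, 1 < p i)
    [∀ i, Fact (1 ≤ ENNReal.ofReal (p i))]
    (hsum : ∑ i, 1 / p i < 1)
    (ρ : ℝ) (hρ : 0 < ρ) (hρ' : 1 / (1 - ∑ i, 1 / p i) ≤ ρ)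
    (A : ContinuousMultilinearMap 𝕂
      (fun i : Fin m => lp (fun _ : ℕ => 𝕂) (ENNReal.ofReal (p i))) 𝕂)
    (hA : ∀ j : Fin m → ℕ, ∃ r : ℝ, 0 ≤ r ∧
      A (fun i => lp.single (ENNReal.ofReal (p i)) (j i) 1) = (r : 𝕂)) :
    (∑' j : Fin m → ℕ,
        (ENNReal.ofReal
          (RCLike.re (A (fun i => lp.single (ENNReal.ofReal (p i)) (j i) 1)))) ^ ρ)
      ^ (1 / ρ) ≤ ENNReal.ofReal ‖A‖ := by
  classical
  choose a ha0 haA using hA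
  have hre : ∀ j, RCLike.re (A (fun i => lp.single (ENNReal.ofReal (p i)) (j i) 1)) = a j := by
    intro j; rw [haA]; simp
  simp_rw [hre]
  have htot : ∑' j : Fin m → ℕ, (ENNReal.ofReal (a j)) ^ ρ ≤ ENNReal.ofReal (‖A‖ ^ ρ) := by
    rw [ENNReal.tsum_eq_iSup_sum]
    refine iSup_le fun F => ?_
    let N := F.sup (fun j => Finset.univ.sup j) + 1
    have hF : F ⊆ Fintype.piFinset (fun _ : Fin m => Finset.range N) := by
      intro j hj
      rw [Fintype.mem_piFinset]
      intro i
      rw [Finset.mem_range]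
      have h1 : j i ≤ Finset.univ.sup j := Finset.le_sup (f := j) (Finset.mem_univ i)
      have h2 : Finset.univ.sup j ≤ F.sup (fun j => Finset.univ.sup j) :=
        Finset.le_sup (f := fun j : Fin m → ℕ => Finset.univ.sup j) hj
      exact Nat.lt_succ_of_le (h1.trans h2)
    refine (Finset.sum_le_sum_of_subset hF).trans ?_
    simp_rw [ENNReal.ofReal_rpow_of_nonneg (ha0 _) hρ.le]
    rw [← ENNReal.ofReal_sum_of_nonneg fun j _ => Real.rpow_nonneg (ha0 j) _]
    exact ENNReal.ofReal_le_ofReal (box_bound 𝕂 m p hp hsum ρ hρ hρ' A a ha0 haA N)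
  refine (ENNReal.rpow_le_rpow htot (one_div_pos.2 hρ).le).trans ?_
  rw [← ENNReal.ofReal_rpow_of_nonneg (norm_nonneg _) hρ.le, ← ENNReal.rpow_mul,
    mul_one_div_cancel hρ.ne', ENNReal.rpow_one]
end

section
/- Let m be a positive integer and p₁, …, p_m ∈ (1, ∞) with 1/p₁ + ⋯ + 1/p_m < 1, and let ρ ∈ (0, ∞). Suppose that ( Σ_{j₁,…,j_m=1}^∞ A(e_{j₁}, …, e_{j_m})^{ρ} )^{1/ρ} ≤ ‖A‖ holds for every bounded nonnegative m-linear form A : ℓ_{p₁} × ⋯ × ℓ_{p_m} → 𝕂. Then ρ ≥ 1/(1 − (1/p₁ + ⋯ + 1/p_m)). -/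
open scoped ENNReal

lemma hl_aux (m : ℕ) (p : Fin m → ℝ) (hp : ∀ i, 1 < p i) (hsum : ∑ i, 1 / p i < 1)
    (a : Fin m → ℕ → ℝ) (ha : ∀ i k, 0 ≤ a i k) (N : Fin m → ℝ) (hN : ∀ i, 0 ≤ N i)
    (h : ∀ i, ∑ k ∈ Finset.range 2, a i k ^ p i ≤ N i ^ p i) :
    ∑ k ∈ Finset.range 2, ∏ i, a i k ≤ (2 : ℝ) ^ (1 - ∑ i, 1 / p i) * ∏ i, N i := by
  have hp0 : ∀ i, 0 < p i := fun i => by linarith [hp i]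
  have key : ∀ b : Fin m → ℕ → ℝ, (∀ i k, 0 ≤ b i k) →
      (∀ i, ∑ k ∈ Finset.range 2, b i k ^ p i ≤ 1) →
      ∑ k ∈ Finset.range 2, ∏ i, b i k ≤ (2 : ℝ) ^ (1 - ∑ i, 1 / p i) := by
    intro b hb hb1
    have h1 : ∀ k, (1 / 2 : ℝ) ^ (1 - ∑ i, 1 / p i) * ∏ i, b i k ≤
        (1 - ∑ i, 1 / p i) * (1 / 2) + ∑ i, 1 / p i * b i k ^ p i := by
      intro k
      have := Real.geom_mean_le_arith_mean_weighted (Finset.univ : Finset (Option (Fin m)))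
        (fun o => o.elim (1 - ∑ i, 1 / p i) (fun i => 1 / p i))
        (fun o => o.elim (1 / 2 : ℝ) (fun i => b i k ^ p i))
        (by
          rintro (_ | i) _
          · simp only [Option.elim]; linarith
          · simp only [Option.elim]; have := hp0 i; positivity)
        (by simp [Fintype.sum_option])
        (by
          rintro (_ | i) _
          · simp only [Option.elim]; norm_num
          · exact Real.rpow_nonneg (hb i k) _)
      simp only [Fintype.sum_option, Fintype.prod_option, Option.elim] at this
      convert this using 3 with i
      rw [← Real.rpow_mul (hb _ k), mul_one_div_cancel (hp0 _).ne', Real.rpow_one]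
    have h2 : (1 / 2 : ℝ) ^ (1 - ∑ i, 1 / p i) * ∑ k ∈ Finset.range 2, ∏ i, b i k ≤ 1 := by
      rw [Finset.mul_sum]
      refine (Finset.sum_le_sum fun k _ => h1 k).trans ?_
      rw [Finset.sum_add_distrib, Finset.sum_comm]
      have : ∑ i, ∑ k ∈ Finset.range 2, 1 / p i * b i k ^ p i ≤ ∑ i, 1 / p i := by
        refine Finset.sum_le_sum fun i _ => ?_
        rw [← Finset.mul_sum]
        have h0 := hp0 i
        exact mul_le_of_le_one_right (by positivity) (hb1 i)
      simp only [Finset.sum_const, Finset.card_range, nsmul_eq_mul]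
      push_cast
      linarith
    rw [one_div, Real.inv_rpow (by norm_num), inv_mul_le_iff₀ (by positivity), mul_one] at h2
    exact h2
  by_cases hz : ∃ i, N i = 0
  · obtain ⟨i, hi⟩ := hz
    have : ∀ k ∈ Finset.range 2, ∏ i, a i k = 0 := by
      intro k hk
      refine Finset.prod_eq_zero (Finset.mem_univ i) ?_
      have h3 := (Finset.single_le_sum (f := fun k => a i k ^ p i)
        (fun k _ => Real.rpow_nonneg (ha i k) _) hk).trans (h i)
      rw [hi, Real.zero_rpow (hp0 i).ne'] at h3
      have h4 := le_antisymm h3 (Real.rpow_nonneg (ha i k) _)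
      exact ((Real.rpow_eq_zero (ha i k) (hp0 i).ne').1 h4)
    rw [Finset.sum_eq_zero this, Finset.prod_eq_zero (Finset.mem_univ i) hi, mul_zero]
  · push Not at hz
    have hNp : ∀ i, 0 < N i := fun i => lt_of_le_of_ne (hN i) (hz i).symm
    have := key (fun i k => a i k / N i) (fun i k => div_nonneg (ha i k) (hN i)) (by
      intro i
      simp only [Real.div_rpow (ha i _) (hN i)]
      rw [← Finset.sum_div, div_le_one (Real.rpow_pos_of_pos (hNp i) _)]
      exact h i)
    simp only [Finset.prod_div_distrib] at this
    rw [← Finset.sum_div, div_le_iff₀ (Finset.prod_pos fun i _ => hNp i)] at this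
    exact this

/-- **Bayart's Hardy–Littlewood inequality for positive multilinear forms
(necessity of the exponent).**
Let `m ≥ 1`, `p₁, …, p_m ∈ (1, ∞)` with `1/p₁ + ⋯ + 1/p_m < 1`, and let
`ρ ∈ (0, ∞)`.  If `(Σ_{j₁,…,j_m} A(e_{j₁},…,e_{j_m})^ρ)^{1/ρ} ≤ ‖A‖` holds for
every bounded nonnegative `m`-linear form `A : ℓ_{p₁} × ⋯ × ℓ_{p_m} → 𝕂`, then
`ρ ≥ 1/(1 − (1/p₁ + ⋯ + 1/p_m))`. -/
theorem positive_hardy_littlewood_necessity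
    (𝕂 : Type*) [RCLike 𝕂] (m : ℕ) (hm : 0 < m)
    (p : Fin m → ℝ) (hp : ∀ i, 1 < p i)
    [∀ i, Fact (1 ≤ ENNReal.ofReal (p i))]
    (hsum : ∑ i, 1 / p i < 1)
    (ρ : ℝ) (hρ : 0 < ρ)
    (H : ∀ A : ContinuousMultilinearMap 𝕂
        (fun i : Fin m => lp (fun _ : ℕ => 𝕂) (ENNReal.ofReal (p i))) 𝕂,
      (∀ j : Fin m → ℕ, ∃ r : ℝ, 0 ≤ r ∧
        A (fun i => lp.single (ENNReal.ofReal (p i)) (j i) 1) = (r : 𝕂)) →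
      (∑' j : Fin m → ℕ,
          (ENNReal.ofReal
            (RCLike.re (A (fun i => lp.single (ENNReal.ofReal (p i)) (j i) 1)))) ^ ρ)
        ^ (1 / ρ) ≤ ENNReal.ofReal ‖A‖) :
    1 / (1 - ∑ i, 1 / p i) ≤ ρ := by
  classical
  have hp0 : ∀ i, 0 < p i := fun i => by linarith [hp i]
  let M : MultilinearMap 𝕂
      (fun i : Fin m => lp (fun _ : ℕ => 𝕂) (ENNReal.ofReal (p i))) 𝕂 :=
    ∑ k ∈ Finset.range 2, (MultilinearMap.mkPiAlgebra 𝕂 (Fin m) 𝕂).compLinearMap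
      (fun i => ({ toFun := fun x => x k
                   map_add' := fun x y => rfl
                   map_smul' := fun c x => rfl } :
          lp (fun _ : ℕ => 𝕂) (ENNReal.ofReal (p i)) →ₗ[𝕂] 𝕂))
  have hM : ∀ x, M x = ∑ k ∈ Finset.range 2, ∏ i, x i k := by
    intro x
    simp [M]
    rfl
  have hb : ∀ x, ‖M x‖ ≤ (2 : ℝ) ^ (1 - ∑ i, 1 / p i) * ∏ i, ‖x i‖ := by
    intro x
    rw [hM]
    refine (norm_sum_le _ _).trans ?_
    simp only [norm_prod]
    refine hl_aux m p hp hsum (fun i k => ‖x i k‖) (fun _ _ => norm_nonneg _) _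
      (fun _ => norm_nonneg _) ?_
    intro i
    have := lp.sum_rpow_le_norm_rpow (p := ENNReal.ofReal (p i))
      (by rw [ENNReal.toReal_ofReal (hp0 i).le]; exact hp0 i) (x i) (Finset.range 2)
    rwa [ENNReal.toReal_ofReal (hp0 i).le] at this
  let A := M.mkContinuous _ hb
  have hA : ∀ j : Fin m → ℕ, A (fun i => lp.single (ENNReal.ofReal (p i)) (j i) 1) =
      (((∑ k ∈ Finset.range 2, ∏ i, if k = j i then 1 else 0 : ℝ)) : 𝕂) := by
    intro j
    change M _ = _
    rw [hM]
    push_cast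
    refine Finset.sum_congr rfl fun k _ => Finset.prod_congr rfl fun i _ => ?_
    rw [Pi.single_apply]
    split_ifs <;> simp
  have hAn : ‖A‖ ≤ (2 : ℝ) ^ (1 - ∑ i, 1 / p i) :=
    M.mkContinuous_norm_le (by positivity) hb
  have h1 := H A (fun j => ⟨_, Finset.sum_nonneg fun k _ => Finset.prod_nonneg fun i _ => by
    split_ifs <;> norm_num, hA j⟩)
  have hone : ∀ k ∈ Finset.range 2, (1 : ℝ≥0∞) ≤ (ENNReal.ofReal
      (RCLike.re (A (fun i => lp.single (ENNReal.ofReal (p i)) ((fun _ => k : Fin m → ℕ) i) 1)))) ^ ρ := by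
    intro k hk
    rw [hA (fun _ => k), RCLike.ofReal_re]
    refine ENNReal.one_le_rpow ?_ hρ
    rw [ENNReal.one_le_ofReal]
    have := Finset.single_le_sum (f := fun k' => ∏ i : Fin m, if k' = k then (1 : ℝ) else 0)
      (fun k' _ => Finset.prod_nonneg fun i _ => by split_ifs <;> norm_num) hk
    simpa using this
  have hinj : Function.Injective (fun (k : ℕ) (_ : Fin m) => k) := fun a b hab =>
    congrFun hab ⟨0, hm⟩
  have h2 : (2 : ℝ≥0∞) ≤ ∑' j : Fin m → ℕ, (ENNReal.ofReal
      (RCLike.re (A (fun i => lp.single (ENNReal.ofReal (p i)) (j i) 1)))) ^ ρ := by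
    refine le_trans ?_ (ENNReal.sum_le_tsum ((Finset.range 2).map ⟨_, hinj⟩))
    rw [Finset.sum_map]
    refine le_trans ?_ (Finset.sum_le_sum hone)
    simp
  have h3 : (2 : ℝ≥0∞) ^ (1 / ρ) ≤ ENNReal.ofReal ((2 : ℝ) ^ (1 - ∑ i, 1 / p i)) :=
    (ENNReal.rpow_le_rpow h2 (by positivity)).trans (h1.trans (ENNReal.ofReal_le_ofReal hAn))
  rw [show (2 : ℝ≥0∞) = ENNReal.ofReal 2 by simp, ENNReal.ofReal_rpow_of_pos (by norm_num),
    ENNReal.ofReal_le_ofReal_iff (by positivity),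
    Real.rpow_le_rpow_left_iff (by norm_num)] at h3
  rw [div_le_iff₀ (by linarith)]
  rw [div_le_iff₀ hρ] at h3
  linarith
end

section
/- Let m be a positive integer, p₁, …, p_m ∈ (1, ∞) with 1/p₁ + ⋯ + 1/p_m < 1, let σ be a bijection of {1, …, m}, and let q₁, …, q_m ∈ (0, ∞) satisfy q_k ≥ δ^{p_{σ(k)}, …, p_{σ(m)}} := 1/(1 − (1/p_{σ(k)} + ⋯ + 1/p_{σ(m)})) for every k = 1, …, m. Then for every bounded nonnegative m-linear form A : ℓ_{p₁} × ⋯ × ℓ_{p_m} → 𝕂 one has the anisotropic inequality ( Σ_{j_{σ(1)}=1}^∞ ( Σ_{j_{σ(2)}=1}^∞ ⋯ ( Σ_{j_{σ(m)}=1}^∞ A(e_{j₁}, …, e_{j_m})^{q_m} )^{q_{m−1}/q_m} ⋯ )^{q₁/q₂} )^{1/q₁} ≤ ‖A‖. -/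
open scoped ENNReal

noncomputable section

/-- The mixed (anisotropic) iterated `ℓ`-norm: for exponents `q 0, …, q (k-1)` and a
nonnegative function `f` of `k` natural indices,
`mixedNorm q f = (Σ_{j₀} (Σ_{j₁} ⋯ (Σ_{j_{k-1}} f(j)^{q_{k-1}})^{q_{k-2}/q_{k-1}} ⋯ )^{q₀/q₁})^{1/q₀}`,
the sums being taken innermost over the last index. -/
noncomputable def mixedNorm : {k : ℕ} → (Fin k → ℝ) → ((Fin k → ℕ) → ℝ≥0∞) → ℝ≥0∞
  | 0, _, f => f (fun i => i.elim0)
  | (_ + 1), q, f =>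
      (∑' j : ℕ, (mixedNorm (fun i => q i.succ) (fun t => f (Fin.cons j t))) ^ (q 0))
        ^ (1 / q 0)

open Finset in
lemma aux_sum_rpow_le {ι : Type*} (s : Finset ι) (f : ι → ℝ≥0∞) {r : ℝ} (hr : 1 ≤ r) :
    ∑ i ∈ s, f i ^ r ≤ (∑ i ∈ s, f i) ^ r := by
  classical
  induction s using Finset.induction_on with
  | empty => simp
  | insert a s ha ih =>
    rw [Finset.sum_insert ha, Finset.sum_insert ha]
    exact (add_le_add le_rfl ih).trans (ENNReal.add_rpow_le_rpow_add _ _ hr)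

lemma aux_tsum_rpow_le {ι : Type*} (f : ι → ℝ≥0∞) {r : ℝ} (hr : 1 ≤ r) :
    ∑' i, f i ^ r ≤ (∑' i, f i) ^ r := by
  rw [ENNReal.tsum_eq_iSup_sum]
  refine iSup_le fun s => (aux_sum_rpow_le s f hr).trans ?_
  exact ENNReal.rpow_le_rpow (ENNReal.sum_le_tsum s) (by linarith)

lemma aux_lp_mono {ι : Type*} (f : ι → ℝ≥0∞) {a b : ℝ} (ha : 0 < a) (hab : a ≤ b) :
    (∑' i, f i ^ b) ^ (1 / b) ≤ (∑' i, f i ^ a) ^ (1 / a) := by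
  have hb : 0 < b := ha.trans_le hab
  have h := aux_tsum_rpow_le (fun i => f i ^ a) (r := b / a) ((one_le_div ha).2 hab)
  have e : ∀ i, (f i ^ a) ^ (b / a) = f i ^ b := fun i => by
    rw [← ENNReal.rpow_mul]; congr 1; field_simp
  simp only [e] at h
  calc _ ≤ ((∑' i, f i ^ a) ^ (b / a)) ^ (1 / b) :=
        ENNReal.rpow_le_rpow h (by positivity)
    _ = _ := by rw [← ENNReal.rpow_mul]; congr 1; field_simp

lemma aux_mixed_mono {k : ℕ} : ∀ (d q : Fin k → ℝ) (f : (Fin k → ℕ) → ℝ≥0∞),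
    (∀ i, 0 < d i) → (∀ i, d i ≤ q i) → mixedNorm q f ≤ mixedNorm d f := by
  induction k with
  | zero => intro d q f _ _; simp [mixedNorm]
  | succ k ih =>
    intro d q f hd hq
    simp only [mixedNorm]
    have h0 : 0 < q 0 := (hd 0).trans_le (hq 0)
    refine le_trans ?_ (aux_lp_mono _ (hd 0) (hq 0))
    refine ENNReal.rpow_le_rpow (ENNReal.tsum_le_tsum fun j => ?_) (by positivity)
    exact ENNReal.rpow_le_rpow (ih _ _ _ (fun i => hd _) (fun i => hq _)) h0.le

lemma aux_mixed_smul {k : ℕ} : ∀ (q : Fin k → ℝ) (c : ℝ≥0∞) (f : (Fin k → ℕ) → ℝ≥0∞),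
    (∀ i, 0 < q i) → mixedNorm q (fun t => c * f t) = c * mixedNorm q f := by
  induction k with
  | zero => intro q c f _; simp [mixedNorm]
  | succ k ih =>
    intro q c f hq
    have h0 := hq 0
    simp only [mixedNorm]
    simp_rw [ih (fun i => q i.succ) c _ (fun i => hq _), ENNReal.mul_rpow_of_nonneg _ _ h0.le]
    rw [ENNReal.tsum_mul_left, ENNReal.mul_rpow_of_nonneg _ _ (by positivity), ← ENNReal.rpow_mul,
      mul_one_div_cancel h0.ne', ENNReal.rpow_one]

lemma aux_super {k : ℕ} : ∀ (q : Fin k → ℝ), Antitone q → (∀ i, 1 ≤ q i) →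
    ∀ (r : ℝ), 1 ≤ r → (∀ i, q i ≤ r) → ∀ (s : Finset ℕ) (f : ℕ → (Fin k → ℕ) → ℝ≥0∞),
    ∑ j ∈ s, mixedNorm q (f j) ^ r ≤ mixedNorm q (fun t => ∑ j ∈ s, f j t) ^ r := by
  induction k with
  | zero => intro q _ _ r hr _ s f; simpa [mixedNorm] using aux_sum_rpow_le s _ hr
  | succ k ih =>
    intro q hq h1 r hr hqr s f
    have h0 : 0 < q 0 := one_pos.trans_le (h1 0)
    simp only [mixedNorm, ← ENNReal.rpow_mul]
    have hr' : 1 ≤ 1 / q 0 * r := by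
      rw [one_div_mul_eq_div]; exact (one_le_div h0).2 (hqr 0)
    refine (aux_sum_rpow_le s _ hr').trans (ENNReal.rpow_le_rpow ?_ (by linarith))
    rw [← Summable.tsum_finsetSum (fun _ _ => ENNReal.summable)]
    refine ENNReal.tsum_le_tsum fun i => ?_
    exact ih (fun i => q i.succ) (fun a b h => hq (Fin.succ_le_succ_iff.2 h)) (fun i => h1 _) (q 0)
      (h1 0) (fun i => hq (Fin.zero_le _)) s (fun j t => f j (Fin.cons i t))

open scoped NNReal in
lemma aux_key (n : ℕ → ℝ≥0∞) (C : ℝ≥0∞) (hC : C ≠ ⊤) {P r Q : ℝ} (hP : 0 < P) (hr : 0 < r)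
    (hQ : 0 < Q) (hQr : 1 / r = 1 / Q + 1 / P)
    (H : ∀ (F : Finset ℕ) (x : ℕ → ℝ≥0), ∑ j ∈ F, ((x j : ℝ≥0∞) * n j) ^ r ≤
      (C * (∑ j ∈ F, (x j : ℝ≥0∞) ^ P) ^ (1 / P)) ^ r) :
    (∑' j, n j ^ Q) ^ (1 / Q) ≤ C := by
  have hn : ∀ j, n j ≠ ⊤ := fun j => by
    have h := H {j} (fun _ => 1)
    simp only [Finset.sum_singleton, ENNReal.coe_one, one_mul, ENNReal.one_rpow, mul_one] at h
    exact ne_top_of_le_ne_top hC ((ENNReal.rpow_le_rpow_iff hr).1 h)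
  lift n to ℕ → ℝ≥0 using hn
  lift C to ℝ≥0 using hC
  have hfin : ∀ F : Finset ℕ, ∑ j ∈ F, n j ^ Q ≤ C ^ Q := by
    intro F
    have h := H F (fun j => n j ^ (Q / P))
    set S := ∑ j ∈ F, n j ^ Q with hS
    have e1 : ∑ j ∈ F, (((n j ^ (Q / P) : ℝ≥0) : ℝ≥0∞) * n j) ^ r = S := by
      rw [hS, ENNReal.ofNNReal_finsetSum]
      refine Finset.sum_congr rfl fun j _ => ?_
      rw [← ENNReal.coe_mul, ← ENNReal.coe_rpow_of_nonneg _ hr.le]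
      congr 1
      by_cases hz : n j = 0
      · simp [hz, hr.ne', hQ.ne']
      nth_rw 2 [← NNReal.rpow_one (n j)]
      rw [← NNReal.rpow_add hz, ← NNReal.rpow_mul]
      congr 1
      field_simp at hQr ⊢
      linarith
    have e2 : ∑ j ∈ F, ((n j ^ (Q / P) : ℝ≥0) : ℝ≥0∞) ^ P = S := by
      rw [hS, ENNReal.ofNNReal_finsetSum]
      refine Finset.sum_congr rfl fun j _ => ?_
      rw [← ENNReal.coe_rpow_of_nonneg _ hP.le, ← NNReal.rpow_mul, div_mul_cancel₀ _ hP.ne']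
    rw [e1, e2, ← ENNReal.coe_rpow_of_nonneg _ (by positivity), ← ENNReal.coe_mul,
      ← ENNReal.coe_rpow_of_nonneg _ hr.le, ENNReal.coe_le_coe] at h
    by_cases hS0 : S = 0
    · rw [hS0]; exact zero_le
    have h2 : S ^ (1 / r) ≤ C * S ^ (1 / P) := by
      have := NNReal.rpow_le_rpow h (z := 1 / r) (by positivity)
      rwa [← NNReal.rpow_mul (_ * _), mul_one_div_cancel hr.ne', NNReal.rpow_one] at this
    rw [hQr, NNReal.rpow_add hS0] at h2
    have h3 : S ^ (1 / Q) ≤ C := le_of_mul_le_mul_right h2 (NNReal.rpow_pos (pos_iff_ne_zero.2 hS0))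
    have := NNReal.rpow_le_rpow h3 hQ.le
    rwa [← NNReal.rpow_mul, one_div_mul_cancel hQ.ne', NNReal.rpow_one] at this
  have : ∑' j, (n j : ℝ≥0∞) ^ Q ≤ (C : ℝ≥0∞) ^ Q := by
    rw [ENNReal.tsum_eq_iSup_sum]
    refine iSup_le fun F => ?_
    have := ENNReal.coe_le_coe.2 (hfin F)
    rw [ENNReal.ofNNReal_finsetSum, ENNReal.coe_rpow_of_nonneg _ hQ.le] at this
    simpa only [ENNReal.coe_rpow_of_nonneg _ hQ.le] using this
  have := ENNReal.rpow_le_rpow this (z := 1 / Q) (by positivity)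
  rwa [← ENNReal.rpow_mul (C : ℝ≥0∞), mul_one_div_cancel hQ.ne', ENNReal.rpow_one] at this

lemma aux_sum_piFinset {M : Type*} [AddCommMonoid M] {k : ℕ} (F : Fin (k + 1) → Finset ℕ)
    (g : (Fin (k + 1) → ℕ) → M) :
    ∑ t ∈ Fintype.piFinset F, g t =
      ∑ t ∈ Fintype.piFinset (fun i : Fin k => F i.succ), ∑ j ∈ F 0, g (Fin.cons j t) := by
  rw [Finset.sum_comm, ← Finset.sum_product']
  symm
  refine Finset.sum_bij' (fun a _ => Fin.cons a.1 a.2) (fun t _ => (t 0, fun i => t i.succ))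
    ?_ ?_ ?_ ?_ ?_
  · rintro ⟨a, b⟩ h
    simp only [Finset.mem_product, Fintype.mem_piFinset] at h ⊢
    intro i
    refine Fin.cases ?_ ?_ i
    · simpa using h.1
    · simpa using h.2
  · intro t h
    simp only [Finset.mem_product, Fintype.mem_piFinset] at h ⊢
    exact ⟨h 0, fun i => h _⟩
  · rintro ⟨a, b⟩ h; simp
  · intro t h; exact Fin.cons_self_tail t
  · rintro ⟨a, b⟩ h; rfl

open scoped NNReal in
lemma aux_main {k : ℕ} : ∀ (p : Fin k → ℝ), (∀ i, 1 < p i) → (∑ i, 1 / p i < 1) →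
    ∀ (f : (Fin k → ℕ) → ℝ≥0∞) (C : ℝ≥0∞), C ≠ ⊤ →
    (∀ (F : Fin k → Finset ℕ) (x : Fin k → ℕ → ℝ≥0),
      ∑ t ∈ Fintype.piFinset F, f t * ∏ i, (x i (t i) : ℝ≥0∞) ≤
        C * ∏ i, (∑ j ∈ F i, (x i j : ℝ≥0∞) ^ p i) ^ (1 / p i)) →
    mixedNorm (fun l => 1 / (1 - ∑ i ∈ Finset.Ici l, 1 / p i)) f ≤ C := by
  induction k with
  | zero =>
    intro p _ _ f C _ H
    have := H (fun _ => ∅) (fun _ _ => 0)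
    simp only [Finset.univ_eq_empty, Finset.prod_empty, mul_one] at this
    simp only [mixedNorm]
    refine le_trans ?_ this
    refine Finset.single_le_sum (f := f) (fun _ _ => zero_le) ?_
    rw [Fintype.mem_piFinset]
    exact fun i => i.elim0
  | succ k ih =>
    intro p hp hs f C hC H
    have hpos : ∀ i, 0 < 1 / p i := fun i => by have := hp i; positivity
    rw [Fin.sum_univ_succ] at hs
    set T := ∑ i : Fin k, 1 / p i.succ with hT
    have hT0 : 0 ≤ T := Finset.sum_nonneg fun i _ => (hpos _).le
    have hT1 : T < 1 := by have := hpos 0; linarith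
    have hle : ∀ l : Fin k, ∑ i ∈ Finset.Ici l, 1 / p i.succ ≤ T := fun l =>
      Finset.sum_le_sum_of_subset_of_nonneg (Finset.subset_univ _) fun i _ _ => (hpos _).le
    have hIci0 : Finset.Ici (0 : Fin (k + 1)) = Finset.univ := by ext; simp
    simp only [mixedNorm]
    simp only [Fin.sum_Ici_succ, hIci0, Fin.sum_univ_succ, ← hT]
    set d : Fin k → ℝ := fun l => 1 / (1 - ∑ i ∈ Finset.Ici l, 1 / p i.succ) with hd
    have hd1 : ∀ l, 1 ≤ d l := fun l => by
      have := hle l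
      have h0 : 0 ≤ ∑ i ∈ Finset.Ici l, 1 / p i.succ := Finset.sum_nonneg fun i _ => (hpos _).le
      rw [hd]; simp only
      rw [le_div_iff₀] <;> linarith
    have hdr : ∀ l, d l ≤ 1 / (1 - T) := fun l => by
      have := hle l
      exact one_div_le_one_div_of_le (by linarith) (by linarith)
    have hanti : Antitone d := fun a b hab => by
      have h1 := hle a
      have h2 : ∑ i ∈ Finset.Ici b, 1 / p i.succ ≤ ∑ i ∈ Finset.Ici a, 1 / p i.succ :=
        Finset.sum_le_sum_of_subset_of_nonneg (Finset.Ici_subset_Ici.2 hab)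
          fun i _ _ => (hpos _).le
      exact one_div_le_one_div_of_le (by linarith) (by linarith)
    have hr1 : 1 ≤ 1 / (1 - T) := by rw [le_div_iff₀] <;> linarith
    have hp0 : 0 < p 0 := one_pos.trans (hp 0)
    refine aux_key _ C hC (P := p 0) (r := 1 / (1 - T)) hp0 (by linarith)
      (one_div_pos.2 (by linarith)) (by rw [one_div_one_div, one_div_one_div]; ring) ?_
    intro F x
    have hsup := aux_super d hanti hd1 _ hr1 hdr F (fun j t => (x j : ℝ≥0∞) * f (Fin.cons j t))
    simp only [aux_mixed_smul d _ _ (fun i => one_pos.trans_le (hd1 i))] at hsup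
    refine hsup.trans (ENNReal.rpow_le_rpow ?_ (by linarith))
    refine ih (fun i => p i.succ) (fun i => hp _) hT1 _ _ ?_ ?_
    · refine ENNReal.mul_ne_top hC (ENNReal.rpow_ne_top_of_nonneg (by positivity) ?_)
      exact ENNReal.sum_ne_top.2 fun j _ => ENNReal.rpow_ne_top_of_nonneg hp0.le ENNReal.coe_ne_top
    · intro G y
      have h := H (Fin.cons F G) (Fin.cons x y)
      rw [aux_sum_piFinset] at h
      simp only [Fin.prod_univ_succ, Fin.cons_zero, Fin.cons_succ] at h
      rw [mul_assoc]
      refine le_trans (le_of_eq ?_) h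
      refine Finset.sum_congr rfl fun t _ => ?_
      rw [Finset.sum_mul]
      refine Finset.sum_congr rfl fun j _ => ?_
      ring

/-- **Sharp anisotropic Hardy–Littlewood inequality for positive multilinear forms
(sufficiency).**  Let `m ≥ 1`, `p₁, …, p_m ∈ (1, ∞)` with `1/p₁ + ⋯ + 1/p_m < 1`, let
`σ` be a permutation of `{1, …, m}` and let `q₁, …, q_m ∈ (0, ∞)` satisfy
`q_k ≥ δ^{p_{σ(k)},…,p_{σ(m)}} = 1/(1 − (1/p_{σ(k)} + ⋯ + 1/p_{σ(m)}))` for all `k`.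
Then every bounded nonnegative `m`-linear form `A : ℓ_{p₁} × ⋯ × ℓ_{p_m} → 𝕂`
satisfies the anisotropic inequality
`(Σ_{j_{σ(1)}} (Σ_{j_{σ(2)}} ⋯ (Σ_{j_{σ(m)}} A(e_{j₁},…,e_{j_m})^{q_m})^{q_{m-1}/q_m} ⋯ )^{q₁/q₂})^{1/q₁} ≤ ‖A‖`. -/
theorem anisotropic_hardy_littlewood_sufficiency
    (𝕂 : Type*) [RCLike 𝕂] (m : ℕ) (hm : 0 < m)
    (p : Fin m → ℝ) (hp : ∀ i, 1 < p i)
    [∀ i, Fact (1 ≤ ENNReal.ofReal (p i))]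
    (hsum : ∑ i, 1 / p i < 1)
    (σ : Equiv.Perm (Fin m))
    (q : Fin m → ℝ) (hq : ∀ k, 0 < q k)
    (hqδ : ∀ k : Fin m, 1 / (1 - ∑ l ∈ Finset.Ici k, 1 / p (σ l)) ≤ q k)
    (A : ContinuousMultilinearMap 𝕂
      (fun i : Fin m => lp (fun _ : ℕ => 𝕂) (ENNReal.ofReal (p i))) 𝕂)
    (hA : ∀ j : Fin m → ℕ, ∃ r : ℝ, 0 ≤ r ∧
      A (fun i => lp.single (ENNReal.ofReal (p i)) (j i) 1) = (r : 𝕂)) :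
    mixedNorm q
        (fun t : Fin m → ℕ =>
          ENNReal.ofReal (RCLike.re
            (A (fun i => lp.single (ENNReal.ofReal (p i)) (t (σ.symm i)) 1))))
      ≤ ENNReal.ofReal ‖A‖ := by
  have hd0 : ∀ k : Fin m, 0 < 1 / (1 - ∑ l ∈ Finset.Ici k, 1 / p (σ l)) := fun k => by
    have h1 : ∑ l ∈ Finset.Ici k, 1 / p (σ l) ≤ ∑ l, 1 / p (σ l) :=
      Finset.sum_le_sum_of_subset_of_nonneg (Finset.subset_univ _) fun i _ _ => by
        have := hp (σ i); positivity
    rw [Equiv.sum_comp σ (fun i => 1 / p i)] at h1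
    exact one_div_pos.2 (by linarith)
  refine (aux_mixed_mono _ q _ hd0 hqδ).trans ?_
  refine aux_main (fun l => p (σ l)) (fun i => hp _)
    (by rw [Equiv.sum_comp σ (fun i => 1 / p i)]; exact hsum) _ _ ENNReal.ofReal_ne_top ?_
  intro F x
  choose a ha0 ha using hA
  simp only [ha, RCLike.ofReal_re]
  have hpr : ∀ i, (ENNReal.ofReal (p i)).toReal = p i := fun i =>
    ENNReal.toReal_ofReal (by have := hp i; linarith)
  have hsub : ∑ t ∈ Fintype.piFinset F, a (fun i => t (σ.symm i)) * ∏ i, (x i (t i) : ℝ) =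
      ∑ r ∈ Fintype.piFinset (fun i => F (σ.symm i)),
        a r * ∏ i, (x (σ.symm i) (r i) : ℝ) := by
    refine Finset.sum_bij' (fun t _ => fun i => t (σ.symm i)) (fun r _ => fun i => r (σ i))
      ?_ ?_ ?_ ?_ ?_
    · intro t h
      simp only [Fintype.mem_piFinset] at h ⊢
      exact fun i => h _
    · intro t h
      simp only [Fintype.mem_piFinset] at h ⊢
      intro i
      simpa using h (σ i)
    · intro t _; simp
    · intro t _; simp
    · intro t _
      rw [Equiv.prod_comp σ.symm (fun i => (x i (t i) : ℝ))]
  have hAv : A (fun i => ∑ j ∈ F (σ.symm i),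
      lp.single (ENNReal.ofReal (p i)) j (((x (σ.symm i) j : ℝ)) : 𝕂)) =
      ((∑ r ∈ Fintype.piFinset (fun i => F (σ.symm i)),
        a r * ∏ i, (x (σ.symm i) (r i) : ℝ) : ℝ) : 𝕂) := by
    rw [A.map_sum_finset]
    rw [RCLike.ofReal_sum]
    refine Finset.sum_congr rfl fun r _ => ?_
    have : (fun i => lp.single (E := fun _ : ℕ => 𝕂) (ENNReal.ofReal (p i)) (r i)
          (((x (σ.symm i) (r i) : ℝ)) : 𝕂)) =
        fun i => (((x (σ.symm i) (r i) : ℝ)) : 𝕂) •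
          lp.single (E := fun _ : ℕ => 𝕂) (ENNReal.ofReal (p i)) (r i) (1 : 𝕂) := by
      funext i
      rw [← lp.single_smul, smul_eq_mul, mul_one]
    rw [this, A.map_smul_univ, ha, smul_eq_mul]
    push_cast
    ring
  have hnorm : ∀ i, ‖∑ j ∈ F (σ.symm i),
      lp.single (E := fun _ : ℕ => 𝕂) (ENNReal.ofReal (p i)) j
        (((x (σ.symm i) j : ℝ)) : 𝕂)‖ =
      (∑ j ∈ F (σ.symm i), (x (σ.symm i) j : ℝ) ^ p i) ^ (1 / p i) := by
    intro i
    have hpi : 0 < p i := one_pos.trans (hp i)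
    have h := lp.norm_sum_single (E := fun _ : ℕ => 𝕂) (p := ENNReal.ofReal (p i))
      (by rw [hpr]; exact hpi) (fun j => (((x (σ.symm i) j : ℝ)) : 𝕂)) (F (σ.symm i))
    simp only [hpr, RCLike.norm_ofReal, NNReal.abs_eq] at h
    rw [← h, ← Real.rpow_mul (norm_nonneg _), mul_one_div_cancel hpi.ne', Real.rpow_one]
  have hle := A.le_opNorm (fun i => ∑ j ∈ F (σ.symm i),
      lp.single (ENNReal.ofReal (p i)) j (((x (σ.symm i) j : ℝ)) : 𝕂))
  rw [hAv, RCLike.norm_ofReal, ← hsub] at hle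
  simp only [hnorm] at hle
  replace hle := (le_abs_self _).trans hle
  rw [← Equiv.prod_comp σ] at hle
  simp only [Equiv.symm_apply_apply] at hle
  have hL : ENNReal.ofReal (∑ t ∈ Fintype.piFinset F,
      a (fun i => t (σ.symm i)) * ∏ i, (x i (t i) : ℝ)) =
      ∑ t ∈ Fintype.piFinset F, ENNReal.ofReal (a (fun i => t (σ.symm i))) *
        ∏ i, (x i (t i) : ℝ≥0∞) := by
    rw [ENNReal.ofReal_sum_of_nonneg
      (fun t _ => mul_nonneg (ha0 _) (Finset.prod_nonneg fun i _ => NNReal.coe_nonneg _))]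
    refine Finset.sum_congr rfl fun t _ => ?_
    rw [ENNReal.ofReal_mul (ha0 _), ENNReal.ofReal_prod_of_nonneg (fun i _ => NNReal.coe_nonneg _)]
    simp only [ENNReal.ofReal_coe_nnreal]
  have hR : ENNReal.ofReal (‖A‖ * ∏ i, (∑ j ∈ F i, (x i j : ℝ) ^ p (σ i)) ^ (1 / p (σ i))) =
      ENNReal.ofReal ‖A‖ * ∏ i, (∑ j ∈ F i, (x i j : ℝ≥0∞) ^ p (σ i)) ^ (1 / p (σ i)) := by
    rw [ENNReal.ofReal_mul (norm_nonneg _),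
      ENNReal.ofReal_prod_of_nonneg (fun i _ => by positivity)]
    congr 1
    refine Finset.prod_congr rfl fun i _ => ?_
    have hpi : 0 < p (σ i) := one_pos.trans (hp _)
    rw [← ENNReal.ofReal_rpow_of_nonneg (by positivity) (by positivity),
      ENNReal.ofReal_sum_of_nonneg (fun j _ => by positivity)]
    congr 1
    refine Finset.sum_congr rfl fun j _ => ?_
    rw [← ENNReal.ofReal_rpow_of_nonneg (by positivity) hpi.le, ENNReal.ofReal_coe_nnreal]
  rw [← hL, ← hR]
  exact ENNReal.ofReal_le_ofReal hle
end
end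

section
/- Let m be a positive integer, p₁, …, p_m ∈ (1, ∞) with 1/p₁ + ⋯ + 1/p_m < 1, let σ be a bijection of {1, …, m}, and let q₁, …, q_m ∈ (0, ∞). Suppose that ( Σ_{j_{σ(1)}=1}^∞ ( Σ_{j_{σ(2)}=1}^∞ ⋯ ( Σ_{j_{σ(m)}=1}^∞ A(e_{j₁}, …, e_{j_m})^{q_m} )^{q_{m−1}/q_m} ⋯ )^{q₁/q₂} )^{1/q₁} ≤ ‖A‖ holds for every bounded nonnegative m-linear form A : ℓ_{p₁} × ⋯ × ℓ_{p_m} → 𝕂. Then q_k ≥ δ^{p_{σ(k)}, …, p_{σ(m)}} := 1/(1 − (1/p_{σ(k)} + ⋯ + 1/p_{σ(m)})) for every k = 1, …, m. -/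
open scoped ENNReal

noncomputable section

lemma aux_le_mixedNorm : ∀ {m : ℕ} (q : Fin m → ℝ) (_ : ∀ k, 0 < q k)
    (f : (Fin m → ℕ) → ℝ≥0∞) (t : Fin m → ℕ), f t ≤ mixedNorm q f
  | 0, q, _, f, t => by
      rw [mixedNorm]
      exact le_of_eq (congrArg f (Subsingleton.elim _ _))
  | m + 1, q, hq, f, t => by
      rw [mixedNorm]
      have h0 := hq 0
      have ih := aux_le_mixedNorm (fun i => q i.succ) (fun i => hq _)
        (fun s => f (Fin.cons (t 0) s)) (Fin.tail t)
      simp only [Fin.cons_self_tail] at ih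
      rw [one_div, ENNReal.le_rpow_inv_iff h0]
      refine (ENNReal.rpow_le_rpow ih h0.le).trans ?_
      exact ENNReal.le_tsum (f := fun j => (mixedNorm (fun i => q i.succ)
        (fun t => f (Fin.cons j t))) ^ (q 0)) (t 0)

lemma aux_two_le_mixedNorm : ∀ {m : ℕ} (q : Fin m → ℝ) (_ : ∀ k, 0 < q k)
    (f : (Fin m → ℕ) → ℝ≥0∞) (k : Fin m) (s t : Fin m → ℕ) (_ : ∀ l < k, s l = t l)
    (_ : s k ≠ t k) (_ : 1 ≤ f s) (_ : 1 ≤ f t), (2 : ℝ≥0∞) ^ (1 / q k) ≤ mixedNorm q f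
  | 0, _, _, _, k, _, _, _, _, _, _ => k.elim0
  | m + 1, q, hq, f, k, s, t, hst, hk, hs, ht => by
      rw [mixedNorm]
      have h0 := hq 0
      induction k using Fin.cases with
      | zero =>
        refine ENNReal.rpow_le_rpow ?_ (by positivity)
        have key : ∀ u : Fin (m + 1) → ℕ, 1 ≤ f u → 1 ≤ (mixedNorm (fun i => q i.succ)
            (fun t => f (Fin.cons (u 0) t))) ^ (q 0) := by
          intro u hu
          have ih := aux_le_mixedNorm (fun i => q i.succ) (fun i => hq _)
            (fun s => f (Fin.cons (u 0) s)) (Fin.tail u)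
          simp only [Fin.cons_self_tail] at ih
          have := ENNReal.rpow_le_rpow (hu.trans ih) h0.le
          simpa using this
        have h2 := ENNReal.sum_le_tsum (f := fun j => (mixedNorm (fun i => q i.succ)
          (fun t => f (Fin.cons j t))) ^ (q 0)) {s 0, t 0}
        rw [Finset.sum_pair hk] at h2
        refine le_trans ?_ h2
        rw [← one_add_one_eq_two]
        exact add_le_add (key s hs) (key t ht)
      | succ k =>
        have h00 : s 0 = t 0 := hst 0 (Fin.succ_pos k)
        have ih := aux_two_le_mixedNorm (fun i => q i.succ) (fun i => hq _)
          (fun u => f (Fin.cons (s 0) u)) k (Fin.tail s) (Fin.tail t)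
          (fun l hl => hst l.succ (Fin.succ_lt_succ_iff.2 hl)) hk
          (by simpa only [Fin.cons_self_tail] using hs)
          (by simpa only [h00, Fin.cons_self_tail] using ht)
        rw [one_div (q 0), ENNReal.le_rpow_inv_iff h0]
        refine (ENNReal.rpow_le_rpow ih h0.le).trans ?_
        exact ENNReal.le_tsum (f := fun j => (mixedNorm (fun i => q i.succ)
          (fun t => f (Fin.cons j t))) ^ (q 0)) (s 0)

lemma aux_amgm {ι : Type*} (S : Finset ι) (p : ι → ℝ) (hp : ∀ i, 0 < p i) (θ : ℝ)
    (hθ : 0 ≤ θ) (hS : ∑ i ∈ S, 1 / p i = 1 - θ) (a : ι → ℝ) (ha : ∀ i, 0 ≤ a i) :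
    (1 / 2 : ℝ) ^ θ * ∏ i ∈ S, a i ≤ θ * (1 / 2) + ∑ i ∈ S, 1 / p i * a i ^ p i := by
  have := Real.geom_mean_le_arith_mean_weighted (Finset.insertNone S)
    (fun o => o.elim θ (fun i => 1 / p i)) (fun o => o.elim (1 / 2 : ℝ) (fun i => a i ^ p i))
    (by
      rintro (_ | i) _
      · exact hθ
      · have := hp i
        simp only [Option.elim]; positivity)
    (by simp [Finset.sum_insertNone] at hS ⊢; linarith)
    (by
      rintro (_ | i) _
      · norm_num
      · exact Real.rpow_nonneg (ha i) _)
  rw [Finset.prod_insertNone, Finset.sum_insertNone] at this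
  simp only [Option.elim] at this
  have e : ∏ i ∈ S, (a i ^ p i) ^ (1 / p i) = ∏ i ∈ S, a i :=
    Finset.prod_congr rfl fun i _ => by
      rw [← Real.rpow_mul (ha i), mul_one_div_cancel (hp i).ne', Real.rpow_one]
  rwa [e] at this

lemma aux_holder {ι : Type*} (S : Finset ι) (p : ι → ℝ) (hp : ∀ i, 0 < p i) (θ : ℝ)
    (hθ : 0 ≤ θ) (hS : ∑ i ∈ S, 1 / p i = 1 - θ) (a b N : ι → ℝ) (ha : ∀ i, 0 ≤ a i)
    (hb : ∀ i, 0 ≤ b i) (hN : ∀ i, 0 < N i) (h : ∀ i, a i ^ p i + b i ^ p i ≤ N i ^ p i) :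
    ∏ i ∈ S, a i + ∏ i ∈ S, b i ≤ 2 ^ θ * ∏ i ∈ S, N i := by
  have h1 := aux_amgm S p hp θ hθ hS (fun i => a i / N i)
    (fun i => div_nonneg (ha i) (hN i).le)
  have h2 := aux_amgm S p hp θ hθ hS (fun i => b i / N i)
    (fun i => div_nonneg (hb i) (hN i).le)
  have h3 : ∑ i ∈ S, 1 / p i * (a i / N i) ^ p i + ∑ i ∈ S, 1 / p i * (b i / N i) ^ p i
      ≤ ∑ i ∈ S, 1 / p i := by
    rw [← Finset.sum_add_distrib]
    refine Finset.sum_le_sum fun i _ => ?_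
    rw [← mul_add, Real.div_rpow (ha i) (hN i).le, Real.div_rpow (hb i) (hN i).le, ← add_div]
    have := hp i
    have h4 : 0 < N i ^ p i := Real.rpow_pos_of_pos (hN i) _
    refine mul_le_of_le_one_right (by positivity) ?_
    rw [div_le_one h4]
    exact h i
  have hP : 0 < ∏ i ∈ S, N i := Finset.prod_pos fun i _ => hN i
  rw [Finset.prod_div_distrib] at h1 h2
  have h5 : (1 / 2 : ℝ) ^ θ * ((∏ i ∈ S, a i + ∏ i ∈ S, b i) / ∏ i ∈ S, N i) ≤ 1 := by
    rw [add_div, mul_add]; linarith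
  rw [one_div, Real.inv_rpow (by norm_num), inv_mul_le_iff₀ (by positivity), mul_one,
    div_le_iff₀ hP] at h5
  exact h5

/-- coordinates used by the test form -/
def auxC {m : ℕ} (k : Fin m) (j : ℕ) (l : Fin m) : ℕ := if k ≤ l then j else 0

/-- single monomial -/
def auxMono (𝕂 : Type*) [RCLike 𝕂] {m : ℕ} (p : Fin m → ℝ)
    [∀ i, Fact (1 ≤ ENNReal.ofReal (p i))] (c : Fin m → ℕ) :
    ContinuousMultilinearMap 𝕂
        (fun i : Fin m => lp (fun _ : ℕ => 𝕂) (ENNReal.ofReal (p i))) 𝕂 :=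
  (ContinuousMultilinearMap.mkPiAlgebra 𝕂 (Fin m) 𝕂).compContinuousLinearMap
    (fun i => lp.evalCLM 𝕂 (fun _ : ℕ => 𝕂) (ENNReal.ofReal (p i)) (c i))

lemma auxMono_apply (𝕂 : Type*) [RCLike 𝕂] {m : ℕ} (p : Fin m → ℝ)
    [∀ i, Fact (1 ≤ ENNReal.ofReal (p i))] (c : Fin m → ℕ)
    (x : ∀ i, lp (fun _ : ℕ => 𝕂) (ENNReal.ofReal (p i))) :
    auxMono 𝕂 p c x = ∏ i, x i (c i) := rfl

lemma auxMono_single (𝕂 : Type*) [RCLike 𝕂] {m : ℕ} (p : Fin m → ℝ)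
    [∀ i, Fact (1 ≤ ENNReal.ofReal (p i))] (c t : Fin m → ℕ) :
    auxMono 𝕂 p c (fun i => lp.single (ENNReal.ofReal (p i)) (t i) 1)
      = (((if c = t then 1 else 0 : ℝ)) : 𝕂) := by
  rw [auxMono_apply]
  simp only [lp.single_apply]
  split_ifs with h
  · subst h; simp
  · obtain ⟨i, hi⟩ := Function.ne_iff.1 h
    rw [Finset.prod_eq_zero (Finset.mem_univ i)]
    · simp
    · exact Pi.single_eq_of_ne hi _

lemma aux_norm (𝕂 : Type*) [RCLike 𝕂] {m : ℕ} (p : Fin m → ℝ) (hp : ∀ i, 1 < p i)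
    [∀ i, Fact (1 ≤ ENNReal.ofReal (p i))] (σ : Equiv.Perm (Fin m)) (k : Fin m) (θ : ℝ)
    (hθ : 0 ≤ θ) (hS : ∑ l ∈ Finset.Ici k, 1 / p (σ l) = 1 - θ) :
    ‖auxMono 𝕂 p (fun i => auxC k 0 (σ.symm i)) + auxMono 𝕂 p (fun i => auxC k 1 (σ.symm i))‖
      ≤ 2 ^ θ := by
  refine ContinuousMultilinearMap.opNorm_le_bound (by positivity) fun x => ?_
  by_cases hx : ∃ i, x i = 0
  · obtain ⟨i, hi⟩ := hx
    rw [ContinuousMultilinearMap.map_coord_zero _ i hi, norm_zero]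
    positivity
  push Not at hx
  rw [add_apply, auxMono_apply, auxMono_apply]
  refine (norm_add_le _ _).trans ?_
  rw [norm_prod, norm_prod]
  have comp : ∀ j, ∏ i, ‖x i (auxC k j (σ.symm i))‖ = ∏ l, ‖x (σ l) (auxC k j l)‖ := by
    intro j
    rw [← Equiv.prod_comp σ (fun i => ‖x i (auxC k j (σ.symm i))‖)]
    simp only [Equiv.symm_apply_apply]
  rw [comp, comp, ← Equiv.prod_comp σ (fun i => ‖x i‖)]
  have split : ∀ g : Fin m → ℝ, ∏ l, g l
      = (∏ l ∈ Finset.Ici k, g l) * ∏ l ∈ (Finset.Ici k)ᶜ, g l :=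
    fun g => (Finset.prod_mul_prod_compl _ g).symm
  rw [split (fun l => ‖x (σ l) (auxC k 0 l)‖), split (fun l => ‖x (σ l) (auxC k 1 l)‖), split (fun l => ‖x (σ l)‖)]
  have hin : ∀ j, ∏ l ∈ Finset.Ici k, ‖x (σ l) (auxC k j l)‖
      = ∏ l ∈ Finset.Ici k, ‖x (σ l) j‖ := fun j =>
    Finset.prod_congr rfl fun l hl => by rw [auxC, if_pos (Finset.mem_Ici.1 hl)]
  have hout : ∀ j, ∏ l ∈ (Finset.Ici k)ᶜ, ‖x (σ l) (auxC k j l)‖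
      = ∏ l ∈ (Finset.Ici k)ᶜ, ‖x (σ l) 0‖ := fun j =>
    Finset.prod_congr rfl fun l hl => by
      rw [auxC, if_neg (by simpa using hl)]
  rw [hin, hin, hout, hout, ← add_mul, ← mul_assoc]
  have hp0 : ∀ i, 0 < p i := fun i => zero_lt_one.trans (hp i)
  have htr : ∀ i, (ENNReal.ofReal (p i)).toReal = p i := fun i =>
    ENNReal.toReal_ofReal (hp0 i).le
  refine mul_le_mul ?_ ?_ (by positivity) (by positivity)
  · refine aux_holder (Finset.Ici k) (fun l => p (σ l)) (fun l => hp0 _) θ hθ hS _ _ _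
      (fun _ => norm_nonneg _) (fun _ => norm_nonneg _) (fun l => norm_pos_iff.2 (hx _)) ?_
    intro l
    have := lp.sum_rpow_le_norm_rpow (by rw [htr]; exact hp0 _) (x (σ l)) {0, 1}
    rw [Finset.sum_pair (by norm_num), htr] at this
    exact this
  · refine Finset.prod_le_prod (fun _ _ => norm_nonneg _) fun l _ => ?_
    exact lp.norm_apply_le_norm (by simpa using hp0 _) _ _

/-- **Sharp anisotropic Hardy–Littlewood inequality for positive multilinear forms
(necessity).**  Let `m ≥ 1`, `p₁, …, p_m ∈ (1, ∞)` with `1/p₁ + ⋯ + 1/p_m < 1`, let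
`σ` be a permutation of `{1, …, m}` and let `q₁, …, q_m ∈ (0, ∞)`.  If the
anisotropic inequality
`(Σ_{j_{σ(1)}} (Σ_{j_{σ(2)}} ⋯ (Σ_{j_{σ(m)}} A(e_{j₁},…,e_{j_m})^{q_m})^{q_{m-1}/q_m} ⋯ )^{q₁/q₂})^{1/q₁} ≤ ‖A‖`
holds for every bounded nonnegative `m`-linear form `A : ℓ_{p₁} × ⋯ × ℓ_{p_m} → 𝕂`,
then `q_k ≥ δ^{p_{σ(k)},…,p_{σ(m)}} = 1/(1 − (1/p_{σ(k)} + ⋯ + 1/p_{σ(m)}))` for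
every `k`. -/
theorem anisotropic_hardy_littlewood_necessity
    (𝕂 : Type*) [RCLike 𝕂] (m : ℕ) (hm : 0 < m)
    (p : Fin m → ℝ) (hp : ∀ i, 1 < p i)
    [∀ i, Fact (1 ≤ ENNReal.ofReal (p i))]
    (hsum : ∑ i, 1 / p i < 1)
    (σ : Equiv.Perm (Fin m))
    (q : Fin m → ℝ) (hq : ∀ k, 0 < q k)
    (H : ∀ A : ContinuousMultilinearMap 𝕂
        (fun i : Fin m => lp (fun _ : ℕ => 𝕂) (ENNReal.ofReal (p i))) 𝕂,
      (∀ j : Fin m → ℕ, ∃ r : ℝ, 0 ≤ r ∧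
        A (fun i => lp.single (ENNReal.ofReal (p i)) (j i) 1) = (r : 𝕂)) →
      mixedNorm q
          (fun t : Fin m → ℕ =>
            ENNReal.ofReal (RCLike.re
              (A (fun i => lp.single (ENNReal.ofReal (p i)) (t (σ.symm i)) 1))))
        ≤ ENNReal.ofReal ‖A‖) :
    ∀ k : Fin m, 1 / (1 - ∑ l ∈ Finset.Ici k, 1 / p (σ l)) ≤ q k := by
  intro k
  have hp0 : ∀ i, 0 < p i := fun i => zero_lt_one.trans (hp i)
  have hθ : 0 < 1 - ∑ l ∈ Finset.Ici k, 1 / p (σ l) := by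
    have h1 : ∑ l ∈ Finset.Ici k, 1 / p (σ l) ≤ ∑ l, 1 / p (σ l) :=
      Finset.sum_le_sum_of_subset_of_nonneg (Finset.subset_univ _)
        fun l _ _ => (one_div_pos.2 (hp0 _)).le
    rw [Equiv.sum_comp σ (fun i => 1 / p i)] at h1
    linarith
  set θ := 1 - ∑ l ∈ Finset.Ici k, 1 / p (σ l) with hθdef
  have hN := aux_norm 𝕂 p hp σ k θ hθ.le (by rw [hθdef]; ring)
  set A := auxMono 𝕂 p (fun i => auxC k 0 (σ.symm i)) +
    auxMono 𝕂 p (fun i => auxC k 1 (σ.symm i)) with hA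
  have hval : ∀ t : Fin m → ℕ, A (fun i => lp.single (ENNReal.ofReal (p i)) (t i) 1)
      = (((if (fun i => auxC k 0 (σ.symm i)) = t then 1 else 0 : ℝ) +
        (if (fun i => auxC k 1 (σ.symm i)) = t then 1 else 0 : ℝ) : ℝ) : 𝕂) := by
    intro t
    rw [hA, add_apply, auxMono_single, auxMono_single, RCLike.ofReal_add]
  have hH := H A (fun j => ⟨_, by split_ifs <;> norm_num, hval j⟩)
  have hle : ∀ j, j = 0 ∨ j = 1 → 1 ≤ ENNReal.ofReal (RCLike.re
      (A (fun i => lp.single (ENNReal.ofReal (p i)) (auxC k j (σ.symm i)) 1))) := by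
    intro j hj
    rw [hval (fun i => auxC k j (σ.symm i)), RCLike.ofReal_re, ENNReal.one_le_ofReal]
    rcases hj with rfl | rfl
    · rw [if_pos rfl]; split_ifs <;> norm_num
    · rw [if_pos (rfl : (fun i => auxC k 1 (σ.symm i)) = _)]; split_ifs <;> norm_num
  have h2 := aux_two_le_mixedNorm q hq (fun t : Fin m → ℕ =>
      ENNReal.ofReal (RCLike.re
        (A (fun i => lp.single (ENNReal.ofReal (p i)) (t (σ.symm i)) 1)))) k (auxC k 0) (auxC k 1)
    (fun l hl => by simp [auxC, not_le.2 hl]) (by simp [auxC])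
    (hle 0 (Or.inl rfl)) (hle 1 (Or.inr rfl))
  have h3 := (h2.trans hH).trans (ENNReal.ofReal_le_ofReal hN)
  have e : (2 : ℝ≥0∞) = ENNReal.ofReal 2 := by simp
  rw [e, ENNReal.ofReal_rpow_of_pos (by norm_num),
    ENNReal.ofReal_le_ofReal_iff (by positivity),
    Real.rpow_le_rpow_left_iff (by norm_num)] at h3
  exact (one_div_le (hq k) hθ).1 h3
end
end

section
/- Let p ∈ (1, ∞) and q₁ ∈ (0, ∞). Suppose that ( Σ_{j=1}^∞ A(e_j)^{q₁} )^{1/q₁} ≤ ‖A‖ holds for every bounded linear functional A : ℓ_p → 𝕂 with A(e_j) ≥ 0 for all j. Then q₁ ≥ p*, the conjugate exponent of p. -/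
open scoped ENNReal

/-- **Optimality of the exponent in the linear (one-variable) case.**
Let `p ∈ (1, ∞)` and `q₁ ∈ (0, ∞)`.  If `(Σ_j A(e_j)^{q₁})^{1/q₁} ≤ ‖A‖` holds
for every bounded linear functional `A : ℓ_p → 𝕂` with `A(e_j) ≥ 0` for all `j`,
then `q₁ ≥ p*`, the conjugate exponent of `p`. -/
theorem linear_case_optimality
    (𝕂 : Type*) [RCLike 𝕂]
    (p : ℝ) (hp : 1 < p) [Fact (1 ≤ ENNReal.ofReal p)]
    (pstar : ℝ) (hpstar : 1 / p + 1 / pstar = 1)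
    (q₁ : ℝ) (hq₁ : 0 < q₁)
    (H : ∀ A : lp (fun _ : ℕ => 𝕂) (ENNReal.ofReal p) →L[𝕂] 𝕂,
      (∀ j : ℕ, ∃ r : ℝ, 0 ≤ r ∧ A (lp.single (ENNReal.ofReal p) j 1) = (r : 𝕂)) →
      (∑' j : ℕ,
          (ENNReal.ofReal (RCLike.re (A (lp.single (ENNReal.ofReal p) j 1)))) ^ q₁)
        ^ (1 / q₁) ≤ ENNReal.ofReal ‖A‖) :
    pstar ≤ q₁ := by
  have hp0 : 0 < p := by linarith
  have hps : 1 / pstar = 1 - 1 / p := by linarith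
  have h1p : 1 / p < 1 := by rw [div_lt_one hp0]; exact hp
  have hps0 : 0 < 1 / pstar := by linarith
  have hpstar0 : 0 < pstar := one_div_pos.mp hps0
  have htr : (ENNReal.ofReal p).toReal = p := ENNReal.toReal_ofReal hp0.le
  have key : ∀ x : lp (fun _ : ℕ => 𝕂) (ENNReal.ofReal p),
      ‖(x 0 : 𝕂) + x 1‖ ≤ (2 : ℝ) ^ (1 / pstar) * ‖x‖ := by
    intro x
    have h1 : ‖(x 0 : 𝕂)‖ ^ p + ‖(x 1 : 𝕂)‖ ^ p ≤ ‖x‖ ^ p := by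
      have := lp.sum_rpow_le_norm_rpow (by rw [htr]; exact hp0) x (Finset.range 2)
      simpa [htr, Finset.sum_range_succ] using this
    have h2 : (‖(x 0 : 𝕂)‖ + ‖(x 1 : 𝕂)‖) ^ p ≤
        (2 : ℝ) ^ (p - 1) * (‖(x 0 : 𝕂)‖ ^ p + ‖(x 1 : 𝕂)‖ ^ p) := by
      have := NNReal.rpow_add_le_mul_rpow_add_rpow ‖(x 0 : 𝕂)‖₊ ‖(x 1 : 𝕂)‖₊ hp.le
      exact_mod_cast this
    refine (norm_add_le _ _).trans ?_
    rw [← Real.rpow_le_rpow_iff (by positivity) (by positivity) hp0,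
      Real.mul_rpow (by positivity) (norm_nonneg _), ← Real.rpow_mul (by norm_num)]
    have he : 1 / pstar * p = p - 1 := by rw [hps]; field_simp
    rw [he]
    exact h2.trans (by gcongr)
  let L : lp (fun _ : ℕ => 𝕂) (ENNReal.ofReal p) →ₗ[𝕂] 𝕂 :=
    { toFun := fun x => (x 0 : 𝕂) + x 1
      map_add' := by intro x y; simp; ring
      map_smul' := by intro c x; simp; ring }
  let A := L.mkContinuous ((2 : ℝ) ^ (1 / pstar)) key
  have hA : ‖A‖ ≤ (2 : ℝ) ^ (1 / pstar) := L.mkContinuous_norm_le (by positivity) key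
  have hAx : ∀ x, A x = (x 0 : 𝕂) + x 1 := fun x => rfl
  have hA0 : A (lp.single (ENNReal.ofReal p) 0 1) = 1 := by simp [hAx]
  have hA1 : A (lp.single (ENNReal.ofReal p) 1 1) = 1 := by simp [hAx]
  have h := H A (by
    intro j
    rcases j with _ | _ | j
    · exact ⟨1, by norm_num, by simpa using hA0⟩
    · exact ⟨1, by norm_num, by simpa using hA1⟩
    · exact ⟨0, le_rfl, by simp [hAx]⟩)
  have hs : (2 : ℝ≥0∞) ≤ ∑' j : ℕ,
      (ENNReal.ofReal (RCLike.re (A (lp.single (ENNReal.ofReal p) j 1)))) ^ q₁ := by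
    refine le_trans ?_ (ENNReal.sum_le_tsum (Finset.range 2))
    rw [Finset.sum_range_succ, Finset.sum_range_one, hA0, hA1]
    simp [one_add_one_eq_two]
  have h3 : (2 : ℝ≥0∞) ^ (1 / q₁) ≤ ENNReal.ofReal ((2 : ℝ) ^ (1 / pstar)) :=
    (ENNReal.rpow_le_rpow hs (by positivity)).trans (h.trans (ENNReal.ofReal_le_ofReal hA))
  have h4 : (2 : ℝ) ^ (1 / q₁) ≤ (2 : ℝ) ^ (1 / pstar) := by
    rw [← ENNReal.ofReal_le_ofReal_iff (by positivity)]
    rw [← ENNReal.ofReal_rpow_of_pos (by norm_num)]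
    simpa using h3
  have h5 := (Real.rpow_le_rpow_left_iff (by norm_num : (1 : ℝ) < 2)).mp h4
  exact (one_div_le_one_div hq₁ hpstar0).mp h5
end

section
/- Let m ≥ 2 and p₁, …, p_m ∈ (1, ∞) with 1/p₁ + ⋯ + 1/p_m < 1, and let D : ℓ_{p₁} × ⋯ × ℓ_{p_m} → 𝕂 be a bounded nonnegative m-linear form. Set r_i := p_i / p_m* for i = 1, …, m−1, where p_m* is the conjugate exponent of p_m. Then there is a bounded nonnegative (m−1)-linear form A : ℓ_{r₁} × ⋯ × ℓ_{r_{m−1}} → 𝕂 with A(e_{j₁}, …, e_{j_{m−1}}) = Σ_{j_m=1}^∞ D(e_{j₁}, …, e_{j_m})^{p_m*} for all indices, and ‖A‖ ≤ ‖D‖^{p_m*}. -/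
open scoped ENNReal

lemma dl_sum_rpow_le {ι : Type*} (J : Finset ι) (f : ι → ℝ) (hf : ∀ j, 0 ≤ f j) (q : ℝ)
    (hq : 1 < q) : ∑ j ∈ J, f j ^ q ≤ (∑ j ∈ J, f j) ^ q := by
  have hS : 0 ≤ ∑ j ∈ J, f j := Finset.sum_nonneg fun j _ => hf j
  have key : ∀ x : ℝ, 0 ≤ x → x ^ q = x * x ^ (q - 1) := by
    intro x hx
    conv_lhs => rw [show q = 1 + (q - 1) by ring]
    rw [Real.rpow_add' hx (by linarith), Real.rpow_one]
  rw [key _ hS, Finset.sum_mul]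
  refine Finset.sum_le_sum fun j hj => ?_
  rw [key _ (hf j)]
  refine mul_le_mul_of_nonneg_left ?_ (hf j)
  exact Real.rpow_le_rpow (hf j) (Finset.single_le_sum (fun i _ => hf i) hj) (by linarith)

lemma dl_core {ι κ : Type*} (J : Finset ι) (K : Finset κ) (g : ι → κ → ℝ)
    (hg : ∀ j k, 0 ≤ g j k) (s q C : ℝ) (hC : 0 ≤ C) (hs : 1 < s) (hq : 1 < q)
    (hsq : 1 / s + 1 / q = 1)
    (H : ∀ v : κ → ℝ, (∀ k, 0 ≤ v k) →
      ∑ j ∈ J, ∑ k ∈ K, g j k * v k ≤ C * (∑ k ∈ K, v k ^ s) ^ (1 / s)) :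
    ∑ j ∈ J, ∑ k ∈ K, g j k ^ q ≤ C ^ q := by
  set b : κ → ℝ := fun k => ∑ j ∈ J, g j k with hb
  have hb0 : ∀ k, 0 ≤ b k := fun k => Finset.sum_nonneg fun j _ => hg j k
  set S := ∑ k ∈ K, b k ^ q with hS
  have hS0 : 0 ≤ S := Finset.sum_nonneg fun k _ => Real.rpow_nonneg (hb0 k) _
  have h1 : ∑ j ∈ J, ∑ k ∈ K, g j k ^ q ≤ S := by
    rw [Finset.sum_comm]
    exact Finset.sum_le_sum fun k _ => dl_sum_rpow_le J (fun j => g j k) (fun j => hg j k) q hq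
  refine h1.trans ?_
  have h2 := H (fun k => b k ^ (q - 1)) fun k => Real.rpow_nonneg (hb0 k) _
  have h3 : ∑ j ∈ J, ∑ k ∈ K, g j k * b k ^ (q - 1) = S := by
    rw [Finset.sum_comm]
    refine Finset.sum_congr rfl fun k _ => ?_
    rw [← Finset.sum_mul]
    conv_rhs => rw [show q = 1 + (q - 1) by ring]
    rw [Real.rpow_add' (hb0 k) (by linarith), Real.rpow_one]
  have hqs : (q - 1) * s = q := by
    have : s ≠ 0 := by linarith
    have : q ≠ 0 := by linarith
    field_simp at hsq
    linarith
  have h4 : ∑ k ∈ K, (b k ^ (q - 1)) ^ s = S := by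
    refine Finset.sum_congr rfl fun k _ => ?_
    rw [← Real.rpow_mul (hb0 k), hqs]
  rw [h3, h4] at h2
  rcases hS0.eq_or_lt with h0 | hpos
  · rw [← h0]; exact Real.rpow_nonneg hC _
  · have h5 : S ^ (1 / q) ≤ C := by
      have : S = S ^ (1 / q) * S ^ (1 / s) := by
        rw [← Real.rpow_add hpos, add_comm, hsq, Real.rpow_one]
      rw [this] at h2
      have hp : 0 < S ^ (1 / s) := Real.rpow_pos_of_pos hpos _
      rw [← this] at h2
      nlinarith
    calc S = (S ^ (1 / q)) ^ q := by
          rw [← Real.rpow_mul hS0, one_div_mul_cancel (by linarith), Real.rpow_one]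
      _ ≤ C ^ q := Real.rpow_le_rpow (Real.rpow_nonneg hS0 _) h5 (by linarith)

lemma dl_bound {𝕂 : Type*} [RCLike 𝕂] {m : ℕ}
    (p : Fin m → ℝ) (hp : ∀ i, 1 < p i)
    [∀ i, Fact (1 ≤ ENNReal.ofReal (p i))]
    (D : ContinuousMultilinearMap 𝕂
      (fun i : Fin m => lp (fun _ : ℕ => 𝕂) (ENNReal.ofReal (p i))) 𝕂)
    (w : Fin m → ℕ → ℝ) (hw : ∀ i n, 0 ≤ w i n) (N : ℕ) :
    ∑ r ∈ Fintype.piFinset (fun _ : Fin m => Finset.range N), (∏ i, w i (r i)) *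
      RCLike.re (D (fun i => lp.single (ENNReal.ofReal (p i)) (r i) 1)) ≤
    ‖D‖ * ∏ i, (∑ n ∈ Finset.range N, w i n ^ p i) ^ (1 / p i) := by
  set Y : ∀ i : Fin m, lp (fun _ : ℕ => 𝕂) (ENNReal.ofReal (p i)) := fun i =>
    ∑ n ∈ Finset.range N, lp.single (ENNReal.ofReal (p i)) n ((w i n : ℝ) : 𝕂) with hY
  have h1 : D Y = ∑ r ∈ Fintype.piFinset (fun _ : Fin m => Finset.range N),
      (((∏ i, w i (r i) : ℝ)) : 𝕂) *
        D (fun i => lp.single (ENNReal.ofReal (p i)) (r i) 1) := by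
    rw [hY, ContinuousMultilinearMap.map_sum_finset]
    refine Finset.sum_congr rfl fun r _ => ?_
    have : (fun i => lp.single (E := fun _ : ℕ => 𝕂) (ENNReal.ofReal (p i)) (r i) ((w i (r i) : ℝ) : 𝕂)) =
        fun i => ((w i (r i) : ℝ) : 𝕂) •
          lp.single (E := fun _ : ℕ => 𝕂) (ENNReal.ofReal (p i)) (r i) 1 := by
      funext i
      rw [← lp.single_smul]; simp
    rw [this, ContinuousMultilinearMap.map_smul_univ]
    simp
  have h2 : ∑ r ∈ Fintype.piFinset (fun _ : Fin m => Finset.range N), (∏ i, w i (r i)) *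
      RCLike.re (D (fun i => lp.single (ENNReal.ofReal (p i)) (r i) 1)) = RCLike.re (D Y) := by
    rw [h1, map_sum]
    exact Finset.sum_congr rfl fun r _ => (RCLike.re_ofReal_mul _ _).symm
  rw [h2]
  refine (RCLike.re_le_norm _).trans ((D.le_opNorm Y).trans (le_of_eq ?_))
  congr 1
  refine Finset.prod_congr rfl fun i _ => ?_
  have hpi : (ENNReal.ofReal (p i)).toReal = p i := ENNReal.toReal_ofReal (by linarith [hp i])
  have h3 := lp.norm_sum_single (E := fun _ : ℕ => 𝕂) (p := ENNReal.ofReal (p i))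
    (by rw [hpi]; linarith [hp i]) (fun n => ((w i n : ℝ) : 𝕂)) (Finset.range N)
  rw [hpi] at h3
  have h4 : ∑ n ∈ Finset.range N, w i n ^ p i = ‖Y i‖ ^ p i := by
    rw [hY, h3]
    refine Finset.sum_congr rfl fun n _ => ?_
    rw [RCLike.norm_ofReal, abs_of_nonneg (hw i n)]
  rw [h4, ← Real.rpow_mul (norm_nonneg _), mul_one_div_cancel (by linarith [hp i]), Real.rpow_one]

lemma dl_sum_snoc {m : ℕ} (N : ℕ) (f : (Fin (m + 1) → ℕ) → ℝ) :
    ∑ r ∈ Fintype.piFinset (fun _ : Fin (m + 1) => Finset.range N), f r =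
    ∑ j ∈ Fintype.piFinset (fun _ : Fin m => Finset.range N), ∑ k ∈ Finset.range N,
      f (Fin.snoc j k) := by
  rw [← Finset.sum_product']
  refine Finset.sum_nbij' (fun r => (Fin.init r, r (Fin.last m))) (fun x => Fin.snoc x.1 x.2)
    ?_ ?_ ?_ ?_ ?_
  · intro r hr
    simp only [Fintype.mem_piFinset, Finset.mem_product] at hr ⊢
    exact ⟨fun i => hr _, hr _⟩
  · intro x hx
    simp only [Fintype.mem_piFinset, Finset.mem_product] at hx ⊢
    intro i
    refine Fin.lastCases ?_ (fun i => ?_) i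
    · simpa using hx.2
    · simpa using hx.1 i
  · intro r _; simp
  · intro x _; simp
  · intro r _; simp

/-- the finite estimate -/
lemma dl_finite {𝕂 : Type*} [RCLike 𝕂] {m : ℕ}
    (p : Fin (m + 1) → ℝ) (hp : ∀ i, 1 < p i)
    [∀ i, Fact (1 ≤ ENNReal.ofReal (p i))]
    (pstar : ℝ) (hq : 1 < pstar) (hpstar : 1 / p (Fin.last m) + 1 / pstar = 1)
    [∀ i : Fin m, Fact (1 ≤ ENNReal.ofReal (p (Fin.castSucc i) / pstar))]
    (D : ContinuousMultilinearMap 𝕂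
      (fun i : Fin (m + 1) => lp (fun _ : ℕ => 𝕂) (ENNReal.ofReal (p i))) 𝕂)
    (a : (Fin (m + 1) → ℕ) → ℝ) (ha : ∀ r, 0 ≤ a r)
    (haD : ∀ r, a r = RCLike.re (D (fun i => lp.single (ENNReal.ofReal (p i)) (r i) 1)))
    (x : ∀ i : Fin m, lp (fun _ : ℕ => 𝕂) (ENNReal.ofReal (p (Fin.castSucc i) / pstar)))
    (F : Finset ((Fin m → ℕ) × ℕ)) :
    ∑ y ∈ F, a (Fin.snoc y.1 y.2) ^ pstar * ∏ i, ‖x i (y.1 i)‖ ≤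
      ‖D‖ ^ pstar * ∏ i, ‖x i‖ := by
  have hq0 : 0 < pstar := by linarith
  obtain ⟨N, hN⟩ : ∃ N : ℕ, F ⊆ (Fintype.piFinset (fun _ : Fin m => Finset.range N)) ×ˢ
      Finset.range N := by
    refine ⟨F.sup (fun y => (Finset.univ.sup y.1) ⊔ y.2) + 1, fun y hy => ?_⟩
    have h : (Finset.univ.sup y.1) ⊔ y.2 ≤ F.sup (fun y => (Finset.univ.sup y.1) ⊔ y.2) :=
      Finset.le_sup (f := fun y : (Fin m → ℕ) × ℕ => (Finset.univ.sup y.1) ⊔ y.2) hy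
    simp only [Finset.mem_product, Fintype.mem_piFinset, Finset.mem_range, Nat.lt_succ_iff]
    exact ⟨fun i => (Finset.le_sup (Finset.mem_univ i)).trans (le_sup_left.trans h),
      le_sup_right.trans h⟩
  refine (Finset.sum_le_sum_of_subset_of_nonneg hN fun y _ _ =>
    mul_nonneg (Real.rpow_nonneg (ha _) _) (Finset.prod_nonneg fun i _ => norm_nonneg _)).trans ?_
  rw [Finset.sum_product]
  set w : Fin m → ℕ → ℝ := fun i n => ‖x i n‖ ^ (1 / pstar) with hw
  have hw0 : ∀ i n, 0 ≤ w i n := fun i n => Real.rpow_nonneg (norm_nonneg _) _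
  have hW0 : ∀ j : Fin m → ℕ, 0 ≤ ∏ i, w i (j i) :=
    fun j => Finset.prod_nonneg fun i _ => hw0 _ _
  have hcan : ∀ t : ℝ, 0 ≤ t → (t ^ (1 / pstar)) ^ pstar = t := by
    intro t ht
    rw [← Real.rpow_mul ht, one_div_mul_cancel hq0.ne', Real.rpow_one]
  have hwn : ∀ i : Fin m, (∑ n ∈ Finset.range N, w i n ^ p i.castSucc) ^ (1 / p i.castSucc) ≤
      ‖x i‖ ^ (1 / pstar) := by
    intro i
    have hpi := hp i.castSucc
    have hpi0 : 0 < p i.castSucc := by linarith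
    have hr : 0 < p i.castSucc / pstar := by positivity
    have ht : (ENNReal.ofReal (p i.castSucc / pstar)).toReal = p i.castSucc / pstar :=
      ENNReal.toReal_ofReal hr.le
    have h := lp.sum_rpow_le_norm_rpow (by rw [ht]; exact hr) (x i) (Finset.range N)
    rw [ht] at h
    have h' : ∑ n ∈ Finset.range N, w i n ^ p i.castSucc ≤ ‖x i‖ ^ (p i.castSucc / pstar) := by
      refine le_trans (le_of_eq (Finset.sum_congr rfl fun n _ => ?_)) h
      rw [hw]
      simp only
      rw [← Real.rpow_mul (norm_nonneg _)]
      congr 1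
      ring
    refine (Real.rpow_le_rpow (Finset.sum_nonneg fun n _ => Real.rpow_nonneg (hw0 _ _) _) h'
      (by positivity)).trans (le_of_eq ?_)
    rw [← Real.rpow_mul (norm_nonneg _)]
    congr 1
    field_simp
  have key := dl_core (Fintype.piFinset (fun _ : Fin m => Finset.range N)) (Finset.range N)
    (fun j k => a (Fin.snoc j k) * ∏ i, w i (j i)) (fun j k => mul_nonneg (ha _) (hW0 _))
    (p (Fin.last m)) pstar (‖D‖ * ∏ i, ‖x i‖ ^ (1 / pstar))
    (mul_nonneg (norm_nonneg _) (Finset.prod_nonneg fun i _ => Real.rpow_nonneg (norm_nonneg _) _))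
    (hp _) hq hpstar (by
      intro v hv
      have hb := dl_bound p hp D (Fin.snoc (α := fun _ => ℕ → ℝ) w v) (by
        intro i
        refine Fin.lastCases ?_ (fun i => ?_) i
        · simpa using hv
        · simpa using hw0 i) N
      rw [dl_sum_snoc] at hb
      simp only [← haD, Fin.prod_univ_castSucc, Fin.snoc_castSucc, Fin.snoc_last] at hb
      have e : ∑ j ∈ Fintype.piFinset (fun _ : Fin m => Finset.range N), ∑ k ∈ Finset.range N,
          a (Fin.snoc j k) * (∏ i, w i (j i)) * v k =
          ∑ j ∈ Fintype.piFinset (fun _ : Fin m => Finset.range N), ∑ k ∈ Finset.range N,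
          (∏ i, w i (j i)) * v k * a (Fin.snoc j k) :=
        Finset.sum_congr rfl fun j _ => Finset.sum_congr rfl fun k _ => by ring
      rw [e]
      refine hb.trans ?_
      rw [← mul_assoc]
      refine mul_le_mul_of_nonneg_right ?_ (Real.rpow_nonneg
        (Finset.sum_nonneg fun k _ => Real.rpow_nonneg (hv k) _) _)
      refine mul_le_mul_of_nonneg_left ?_ (norm_nonneg _)
      exact Finset.prod_le_prod (fun i _ => Real.rpow_nonneg
        (Finset.sum_nonneg fun n _ => Real.rpow_nonneg (hw0 _ _) _) _) fun i _ => hwn i)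
  have e2 : ∀ j : Fin m → ℕ, (∏ i, w i (j i)) ^ pstar = ∏ i, ‖x i (j i)‖ := by
    intro j
    rw [← Real.finsetProd_rpow _ _ (fun i _ => hw0 _ _)]
    exact Finset.prod_congr rfl fun i _ => hcan _ (norm_nonneg _)
  have e3 : (∏ i, ‖x i‖ ^ (1 / pstar)) ^ pstar = ∏ i, ‖x i‖ := by
    rw [← Real.finsetProd_rpow _ _ (fun i _ => Real.rpow_nonneg (norm_nonneg _) _)]
    exact Finset.prod_congr rfl fun i _ => hcan _ (norm_nonneg _)
  rw [Real.mul_rpow (norm_nonneg _)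
    (Finset.prod_nonneg fun i _ => Real.rpow_nonneg (norm_nonneg _) _), e3] at key
  refine le_trans (le_of_eq ?_) key
  refine Finset.sum_congr rfl fun j _ => Finset.sum_congr rfl fun k _ => ?_
  rw [Real.mul_rpow (ha _) (hW0 _), e2]

/-- **The induction step: lowering the degree of a positive multilinear form.**
Let `m + 1 ≥ 2`, let `p₁, …, p_{m+1} ∈ (1, ∞)` with `1/p₁ + ⋯ + 1/p_{m+1} < 1`,
and let `D : ℓ_{p₁} × ⋯ × ℓ_{p_{m+1}} → 𝕂` be a bounded nonnegative
`(m+1)`-linear form.  With `p* ` the conjugate exponent of the last exponent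
`p_{m+1}` and `r_i := p_i / p*`, there exists a bounded nonnegative `m`-linear
form `A : ℓ_{r₁} × ⋯ × ℓ_{r_m} → 𝕂` with
`A(e_{j₁},…,e_{j_m}) = Σ_{j_{m+1}} D(e_{j₁},…,e_{j_{m+1}})^{p*}` for all indices,
and `‖A‖ ≤ ‖D‖^{p*}`. -/
theorem degree_lowering_step
    (𝕂 : Type*) [RCLike 𝕂] (m : ℕ) (hm : 1 ≤ m)
    (p : Fin (m + 1) → ℝ) (hp : ∀ i, 1 < p i)
    [∀ i, Fact (1 ≤ ENNReal.ofReal (p i))]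
    (hsum : ∑ i, 1 / p i < 1)
    (pstar : ℝ) (hpstar : 1 / p (Fin.last m) + 1 / pstar = 1)
    [∀ i : Fin m, Fact (1 ≤ ENNReal.ofReal (p (Fin.castSucc i) / pstar))]
    (D : ContinuousMultilinearMap 𝕂
      (fun i : Fin (m + 1) => lp (fun _ : ℕ => 𝕂) (ENNReal.ofReal (p i))) 𝕂)
    (hD : ∀ j : Fin (m + 1) → ℕ, ∃ r : ℝ, 0 ≤ r ∧
      D (fun i => lp.single (ENNReal.ofReal (p i)) (j i) 1) = (r : 𝕂)) :
    ∃ A : ContinuousMultilinearMap 𝕂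
        (fun i : Fin m => lp (fun _ : ℕ => 𝕂) (ENNReal.ofReal (p (Fin.castSucc i) / pstar))) 𝕂,
      (∀ j : Fin m → ℕ, ∃ r : ℝ, 0 ≤ r ∧
        A (fun i => lp.single (ENNReal.ofReal (p (Fin.castSucc i) / pstar)) (j i) 1) = (r : 𝕂)) ∧
      (∀ j : Fin m → ℕ,
        A (fun i => lp.single (ENNReal.ofReal (p (Fin.castSucc i) / pstar)) (j i) 1) =
          ((∑' jm : ℕ,
            (RCLike.re (D (fun i =>
              lp.single (ENNReal.ofReal (p i)) ((Fin.snoc j jm : Fin (m + 1) → ℕ) i) 1))) ^ pstar : ℝ) : 𝕂)) ∧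
      ‖A‖ ≤ ‖D‖ ^ pstar := by
  classical
  have hs := hp (Fin.last m)
  have hs0 : 0 < 1 / p (Fin.last m) := by positivity
  have hs1 : 1 / p (Fin.last m) < 1 := by
    rw [div_lt_one (by linarith)]; exact hs
  have hq0 : 0 < pstar := by
    have : 0 < 1 / pstar := by linarith
    exact one_div_pos.mp this
  have hq : 1 < pstar := by
    have : 1 / pstar < 1 := by linarith
    rwa [div_lt_one hq0] at this
  set a : (Fin (m + 1) → ℕ) → ℝ := fun r =>
    RCLike.re (D (fun i => lp.single (ENNReal.ofReal (p i)) (r i) 1)) with haD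
  have ha : ∀ r, 0 ≤ a r := by
    intro r
    obtain ⟨t, ht, h⟩ := hD r
    simp only [haD, h, RCLike.ofReal_re]
    exact ht
  have hfin := dl_finite p hp pstar hq hpstar D a ha (fun _ => rfl)
  let T : (∀ i : Fin m, lp (fun _ : ℕ => 𝕂) (ENNReal.ofReal (p (Fin.castSucc i) / pstar))) →
      ((Fin m → ℕ) × ℕ) → 𝕂 := fun x y =>
    ((a (Fin.snoc y.1 y.2) ^ pstar : ℝ) : 𝕂) * ∏ i, x i (y.1 i)
  have hTn : ∀ x y, ‖T x y‖ = a (Fin.snoc y.1 y.2) ^ pstar * ∏ i, ‖x i (y.1 i)‖ := by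
    intro x y
    simp only [T]
    rw [norm_mul, norm_prod, RCLike.norm_ofReal, abs_of_nonneg (Real.rpow_nonneg (ha _) _)]
  have hTs : ∀ x, Summable fun y => ‖T x y‖ := by
    intro x
    refine summable_of_sum_le (c := ‖D‖ ^ pstar * ∏ i, ‖x i‖) (fun y => norm_nonneg _) fun F => ?_
    simp only [hTn]
    exact hfin x F
  have hTb : ∀ x, ‖∑' y, T x y‖ ≤ ‖D‖ ^ pstar * ∏ i, ‖x i‖ := by
    intro x
    refine (norm_tsum_le_tsum_norm (hTs x)).trans ?_
    refine (hTs x).tsum_le_of_sum_le fun F => ?_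
    simp only [hTn]
    exact hfin x F
  let A₀ : MultilinearMap 𝕂
      (fun i : Fin m => lp (fun _ : ℕ => 𝕂) (ENNReal.ofReal (p (Fin.castSucc i) / pstar))) 𝕂 :=
    MultilinearMap.mk' (fun x => ∑' y, T x y)
      (by
        intro x i u v
        rw [← (hTs _).of_norm.tsum_add (hTs _).of_norm]
        refine tsum_congr fun y => ?_
        simp only [T]
        rw [← mul_add]
        congr 1
        rw [← Finset.mul_prod_erase _ _ (Finset.mem_univ i),
          ← Finset.mul_prod_erase _ (fun k => (Function.update x i u k) (y.1 k)) (Finset.mem_univ i),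
          ← Finset.mul_prod_erase _ (fun k => (Function.update x i v k) (y.1 k)) (Finset.mem_univ i)]
        have hne : ∀ z, ∏ k ∈ Finset.univ.erase i, (Function.update x i z k) (y.1 k) =
            ∏ k ∈ Finset.univ.erase i, (x k) (y.1 k) := fun z =>
          Finset.prod_congr rfl fun k hk => by
            rw [Function.update_of_ne (Finset.ne_of_mem_erase hk)]
        simp only [hne, Function.update_self, lp.coeFn_add, Pi.add_apply]
        ring)
      (by
        intro x i c u
        rw [smul_eq_mul, ← tsum_mul_left]
        refine tsum_congr fun y => ?_
        simp only [T]
        rw [← Finset.mul_prod_erase _ _ (Finset.mem_univ i),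
          ← Finset.mul_prod_erase _ (fun k => (Function.update x i u k) (y.1 k)) (Finset.mem_univ i)]
        have hne : ∀ z, ∏ k ∈ Finset.univ.erase i, (Function.update x i z k) (y.1 k) =
            ∏ k ∈ Finset.univ.erase i, (x k) (y.1 k) := fun z =>
          Finset.prod_congr rfl fun k hk => by
            rw [Function.update_of_ne (Finset.ne_of_mem_erase hk)]
        simp only [hne, Function.update_self, lp.coeFn_smul, Pi.smul_apply, smul_eq_mul]
        ring)
  have hval : ∀ j : Fin m → ℕ,
      A₀ (fun i => lp.single (ENNReal.ofReal (p (Fin.castSucc i) / pstar)) (j i) 1) =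
        ((∑' jm : ℕ, a (Fin.snoc j jm) ^ pstar : ℝ) : 𝕂) := by
    intro j
    change ∑' y, T _ y = _
    rw [RCLike.ofReal_tsum]
    have hinj : Function.Injective (fun k : ℕ => (j, k)) := fun k l h => (Prod.mk.inj h).2
    rw [← hinj.tsum_eq]
    · refine tsum_congr fun k => ?_
      simp [T]
    · intro y hy
      refine ⟨y.2, ?_⟩
      by_contra hne
      apply hy
      have : ∃ i, y.1 i ≠ j i := by
        by_contra! hall
        exact hne (Prod.ext (funext fun i => (hall i).symm) rfl)
      obtain ⟨i, hi⟩ := this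
      simp only [T]
      rw [Finset.prod_eq_zero (Finset.mem_univ i), mul_zero]
      exact lp.single_apply_ne _ _ _ hi
  refine ⟨A₀.mkContinuous (‖D‖ ^ pstar) hTb, fun j => ⟨_, ?_, hval j⟩, fun j => hval j,
    A₀.mkContinuous_norm_le (Real.rpow_nonneg (norm_nonneg _) _) hTb⟩
  exact tsum_nonneg fun k => Real.rpow_nonneg (ha _) _
end

section
/- Let m be a positive integer, p₁, …, p_m ∈ (1, ∞) with 1/p₁ + ⋯ + 1/p_m ≥ 1, and let q₁, …, q_m ∈ (0, ∞) be finite exponents. Then the inequality ( Σ_{j₁=1}^∞ ( Σ_{j₂=1}^∞ ⋯ ( Σ_{j_m=1}^∞ A(e_{j₁}, …, e_{j_m})^{q_m} )^{q_{m−1}/q_m} ⋯ )^{q₁/q₂} )^{1/q₁} ≤ ‖A‖ fails for some bounded nonnegative m-linear form A : ℓ_{p₁} × ⋯ × ℓ_{p_m} → 𝕂; that is, no finite exponent q₁ can occur in the outermost sum. -/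
open scoped ENNReal

noncomputable section

theorem le_one_of_rpow_aux {x r : ℝ} (_ : 0 ≤ x) (hr : 0 < r) (h : x ^ r ≤ 1) : x ≤ 1 := by
  by_contra hc
  exact absurd (Real.one_lt_rpow (not_le.1 hc) hr) (not_lt.2 h)

theorem le_mixedNorm_aux : ∀ {k : ℕ} (q : Fin k → ℝ) (_ : ∀ i, 0 < q i)
    (f : (Fin k → ℕ) → ℝ≥0∞) (t : Fin k → ℕ), f t ≤ mixedNorm q f
  | 0, q, hq, f, t => by
      rw [mixedNorm]
      apply le_of_eq
      congr 1
      exact Subsingleton.elim _ _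
  | (k + 1), q, hq, f, t => by
      rw [mixedNorm, one_div, ENNReal.le_rpow_inv_iff (hq 0)]
      refine le_trans ?_ (ENNReal.le_tsum (t 0))
      refine ENNReal.rpow_le_rpow ?_ (hq 0).le
      refine le_trans ?_ (le_mixedNorm_aux (fun i => q i.succ) (fun i => hq _) _ (fun i => t i.succ))
      apply le_of_eq
      congr 1
      exact (Fin.cons_self_tail t).symm

theorem holder_aux1 {m : ℕ} (p : Fin m → ℝ) (hp : ∀ i, 1 < p i)
    (hsum : 1 ≤ ∑ i, 1 / p i) (a : Fin m → ℝ) (ha : ∀ i, 0 ≤ a i)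
    (ha1 : ∀ i, a i ≤ 1) :
    ∏ i, a i ≤ (∑ i, 1 / p i * a i ^ p i) / ∑ i, 1 / p i := by
  have h := Real.geom_mean_le_arith_mean Finset.univ (fun i => 1 / p i) (fun i => a i ^ p i)
    (fun i _ => by have := hp i; positivity) (by linarith)
    (fun i _ => Real.rpow_nonneg (ha i) _)
  refine le_trans ?_ h
  have e : ∏ i, (a i ^ p i) ^ (1 / p i) = ∏ i, a i := by
    refine Finset.prod_congr rfl fun i _ => ?_
    rw [one_div, Real.rpow_rpow_inv (ha i) (by have := hp i; positivity)]
  simp only [e]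
  have h0 : 0 ≤ ∏ i, a i := Finset.prod_nonneg fun i _ => ha i
  have h1 : ∏ i, a i ≤ 1 := Finset.prod_le_one (fun i _ => ha i) (fun i _ => ha1 i)
  exact Real.self_le_rpow_of_le_one h0 h1 (inv_le_one_of_one_le₀ hsum)

theorem holder_aux2 {m : ℕ} (p : Fin m → ℝ) (hp : ∀ i, 1 < p i)
    (hsum : 1 ≤ ∑ i, 1 / p i) (a b : Fin m → ℝ) (ha : ∀ i, 0 ≤ a i) (hb : ∀ i, 0 ≤ b i)
    (hab : ∀ i, a i ^ p i + b i ^ p i ≤ 1) :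
    ∏ i, a i + ∏ i, b i ≤ 1 := by
  have hle : ∀ i, a i ≤ 1 ∧ b i ≤ 1 := by
    intro i
    have h1 := Real.rpow_nonneg (ha i) (p i)
    have h2 := Real.rpow_nonneg (hb i) (p i)
    have h3 := hab i
    have h4 : 0 < p i := by linarith [hp i]
    exact ⟨le_one_of_rpow_aux (ha i) h4 (by linarith),
      le_one_of_rpow_aux (hb i) h4 (by linarith)⟩
  have h1 := holder_aux1 p hp hsum a ha (fun i => (hle i).1)
  have h2 := holder_aux1 p hp hsum b hb (fun i => (hle i).2)
  refine (add_le_add h1 h2).trans ?_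
  rw [← add_div, ← Finset.sum_add_distrib]
  apply div_le_one_of_le₀ _ (by linarith)
  refine Finset.sum_le_sum fun i _ => ?_
  have : 0 < 1 / p i := by have := hp i; positivity
  have := hab i
  nlinarith

theorem holder_aux3 {m : ℕ} (p : Fin m → ℝ) (hp : ∀ i, 1 < p i)
    (hsum : 1 ≤ ∑ i, 1 / p i) (a b N : Fin m → ℝ) (ha : ∀ i, 0 ≤ a i) (hb : ∀ i, 0 ≤ b i)
    (hN : ∀ i, 0 ≤ N i)
    (hab : ∀ i, a i ^ p i + b i ^ p i ≤ N i ^ p i) :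
    ∏ i, a i + ∏ i, b i ≤ ∏ i, N i := by
  by_cases h : ∀ i, 0 < N i
  · have := holder_aux2 p hp hsum (fun i => a i / N i) (fun i => b i / N i)
      (fun i => div_nonneg (ha i) (hN i)) (fun i => div_nonneg (hb i) (hN i)) (fun i => by
        rw [Real.div_rpow (ha i) (hN i), Real.div_rpow (hb i) (hN i), ← add_div]
        exact div_le_one_of_le₀ (hab i) (Real.rpow_nonneg (hN i) _))
    rw [Finset.prod_div_distrib, Finset.prod_div_distrib, ← add_div,
      div_le_one (Finset.prod_pos fun i _ => h i)] at this
    exact this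
  · push Not at h
    obtain ⟨i, hi⟩ := h
    have hi : N i = 0 := le_antisymm hi (hN i)
    have hpi : 0 < p i := by linarith [hp i]
    have h3 := hab i
    rw [hi, Real.zero_rpow hpi.ne'] at h3
    have h1 := Real.rpow_nonneg (ha i) (p i)
    have h2 := Real.rpow_nonneg (hb i) (p i)
    have ea : a i = 0 := (Real.rpow_eq_zero (ha i) hpi.ne').1 (by linarith)
    have eb : b i = 0 := (Real.rpow_eq_zero (hb i) hpi.ne').1 (by linarith)
    rw [Finset.prod_eq_zero (Finset.mem_univ i) ea, Finset.prod_eq_zero (Finset.mem_univ i) eb,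
      Finset.prod_eq_zero (Finset.mem_univ i) hi]
    simp

/-- Coordinate evaluation on `lp`. -/
def lpCoord (𝕂 : Type*) [RCLike 𝕂] (p : ℝ≥0∞) (n : ℕ) : lp (fun _ : ℕ => 𝕂) p →ₗ[𝕂] 𝕂 where
  toFun x := x n
  map_add' _ _ := rfl
  map_smul' _ _ := rfl

/-- Product of the `n`-th coordinates. -/
def prodCoord (𝕂 : Type*) [RCLike 𝕂] {m : ℕ} (p : Fin m → ℝ) (n : ℕ) :
    MultilinearMap 𝕂 (fun i : Fin m => lp (fun _ : ℕ => 𝕂) (ENNReal.ofReal (p i))) 𝕂 :=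
  (MultilinearMap.mkPiAlgebra 𝕂 (Fin m) 𝕂).compLinearMap
    (fun i => lpCoord 𝕂 (ENNReal.ofReal (p i)) n)

theorem prodCoord_apply (𝕂 : Type*) [RCLike 𝕂] {m : ℕ} (p : Fin m → ℝ) (n : ℕ)
    (x : (i : Fin m) → lp (fun _ : ℕ => 𝕂) (ENNReal.ofReal (p i))) :
    prodCoord 𝕂 p n x = ∏ i, x i n := by
  simp only [prodCoord, MultilinearMap.compLinearMap_apply, MultilinearMap.mkPiAlgebra_apply]
  rfl

theorem prodCoord_single (𝕂 : Type*) [RCLike 𝕂] {m : ℕ} (p : Fin m → ℝ) (n : ℕ)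
    (j : Fin m → ℕ) :
    prodCoord 𝕂 p n (fun i => lp.single (ENNReal.ofReal (p i)) (j i) 1)
      = (((∏ i, if n = j i then 1 else 0 : ℝ) : ℝ) : 𝕂) := by
  rw [prodCoord_apply]
  push_cast
  refine Finset.prod_congr rfl fun i _ => ?_
  rw [Pi.single_apply]
  split_ifs <;> simp

theorem prodCoord_bound (𝕂 : Type*) [RCLike 𝕂] {m : ℕ} (p : Fin m → ℝ) (hp : ∀ i, 1 < p i)
    [∀ i, Fact (1 ≤ ENNReal.ofReal (p i))]
    (hsum : 1 ≤ ∑ i, 1 / p i)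
    (x : (i : Fin m) → lp (fun _ : ℕ => 𝕂) (ENNReal.ofReal (p i))) :
    ‖(prodCoord 𝕂 p 0 + prodCoord 𝕂 p 1) x‖ ≤ 1 * ∏ i, ‖x i‖ := by
  rw [_root_.add_apply, prodCoord_apply, prodCoord_apply, one_mul]
  refine (norm_add_le _ _).trans ?_
  rw [norm_prod, norm_prod]
  refine holder_aux3 p hp hsum _ _ _ (fun i => norm_nonneg _) (fun i => norm_nonneg _)
    (fun i => norm_nonneg _) (fun i => ?_)
  have e : (ENNReal.ofReal (p i)).toReal = p i := ENNReal.toReal_ofReal (by linarith [hp i])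
  have := lp.sum_rpow_le_norm_rpow (p := ENNReal.ofReal (p i))
    (by rw [e]; linarith [hp i]) (x i) {0, 1}
  rw [e] at this
  simpa using this

/-- **Failure of the Hardy–Littlewood inequality with finite outer exponent when
`1/p₁ + ⋯ + 1/p_m ≥ 1`.**  Let `m ≥ 1` and `p₁, …, p_m ∈ (1, ∞)` with
`1/p₁ + ⋯ + 1/p_m ≥ 1`, and let `q₁, …, q_m ∈ (0, ∞)` be finite exponents.  Then
the inequality
`(Σ_{j₁} (Σ_{j₂} ⋯ (Σ_{j_m} A(e_{j₁},…,e_{j_m})^{q_m})^{q_{m-1}/q_m} ⋯ )^{q₁/q₂})^{1/q₁} ≤ ‖A‖`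
fails for some bounded nonnegative `m`-linear form
`A : ℓ_{p₁} × ⋯ × ℓ_{p_m} → 𝕂`. -/
theorem no_finite_outer_exponent
    (𝕂 : Type*) [RCLike 𝕂] (m : ℕ) (hm : 0 < m)
    (p : Fin m → ℝ) (hp : ∀ i, 1 < p i)
    [∀ i, Fact (1 ≤ ENNReal.ofReal (p i))]
    (hsum : 1 ≤ ∑ i, 1 / p i)
    (q : Fin m → ℝ) (hq : ∀ k, 0 < q k) :
    ∃ A : ContinuousMultilinearMap 𝕂
        (fun i : Fin m => lp (fun _ : ℕ => 𝕂) (ENNReal.ofReal (p i))) 𝕂,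
      (∀ j : Fin m → ℕ, ∃ r : ℝ, 0 ≤ r ∧
        A (fun i => lp.single (ENNReal.ofReal (p i)) (j i) 1) = (r : 𝕂)) ∧
      ¬ (mixedNorm q
            (fun t : Fin m → ℕ =>
              ENNReal.ofReal (RCLike.re
                (A (fun i => lp.single (ENNReal.ofReal (p i)) (t i) 1))))
          ≤ ENNReal.ofReal ‖A‖) := by
  obtain ⟨k, rfl⟩ : ∃ k, m = k + 1 := ⟨m - 1, by omega⟩
  have key : ∀ j : Fin (k + 1) → ℕ, (MultilinearMap.mkContinuous
      (prodCoord 𝕂 p 0 + prodCoord 𝕂 p 1) 1 (prodCoord_bound 𝕂 p hp hsum))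
        (fun i => lp.single (ENNReal.ofReal (p i)) (j i) 1) =
      (((∏ i, if 0 = j i then 1 else 0 : ℝ) + (∏ i, if 1 = j i then 1 else 0 : ℝ) : ℝ) : 𝕂) := by
    intro j
    rw [MultilinearMap.coe_mkContinuous, _root_.add_apply, prodCoord_single,
      prodCoord_single]
    push_cast
    rfl
  refine ⟨MultilinearMap.mkContinuous (prodCoord 𝕂 p 0 + prodCoord 𝕂 p 1) 1
    (prodCoord_bound 𝕂 p hp hsum), fun j => ⟨_, ?_, key j⟩, ?_⟩
  · refine add_nonneg ?_ ?_ <;>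
      exact Finset.prod_nonneg fun i _ => by split_ifs <;> norm_num
  · rw [not_le]
    simp only [key, RCLike.ofReal_re]
    refine lt_of_le_of_lt (b := 1) ?_ ?_
    · rw [← ENNReal.ofReal_one]
      exact ENNReal.ofReal_le_ofReal (MultilinearMap.mkContinuous_norm_le _ zero_le_one _)
    · rw [mixedNorm]
      apply ENNReal.one_lt_rpow _ (by have := hq 0; positivity)
      refine lt_of_lt_of_le ?_ (ENNReal.sum_le_tsum {0, 1})
      rw [Finset.sum_pair (by norm_num)]
      refine lt_of_lt_of_le (b := 1 + 1) (by norm_num) (add_le_add ?_ ?_)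
      · apply ENNReal.one_le_rpow _ (hq 0)
        refine le_trans ?_ (le_mixedNorm_aux _ (fun i => hq _) _ (fun _ => 0))
        simp [Fin.prod_univ_succ]
      · apply ENNReal.one_le_rpow _ (hq 0)
        refine le_trans ?_ (le_mixedNorm_aux _ (fun i => hq _) _ (fun _ => 1))
        simp [Fin.prod_univ_succ]
end
end

section
/- Let m ≥ 2, p₁, …, p_m ∈ (1, ∞) with 1/p₁ + ⋯ + 1/p_m ≥ 1, and suppose there is an index i₀ ∈ {2, …, m} such that 1/p_{i₀−1} + ⋯ + 1/p_m ≥ 1 and 1/p_{i₀} + ⋯ + 1/p_m < 1. Then for every bounded nonnegative m-linear form A : ℓ_{p₁} × ⋯ × ℓ_{p_m} → 𝕂 one has sup_{j₁, …, j_{i₀−1}} ( Σ_{j_{i₀}=1}^∞ ( ⋯ ( Σ_{j_m=1}^∞ A(e_{j₁}, …, e_{j_m})^{δ^{p_m}} )^{δ^{p_{m−1},p_m}/δ^{p_m}} ⋯ )^{δ^{p_{i₀},…,p_m}/δ^{p_{i₀+1},…,p_m}} )^{1/δ^{p_{i₀},…,p_m}} ≤ ‖A‖. -/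
open scoped ENNReal

noncomputable section

open scoped NNReal

/-- Recursive form of the boundedness of a nonnegative array as a multilinear form. -/
def mixedBdd : {k : ℕ} → (Fin k → ℝ) → ((Fin k → ℕ) → ℝ≥0∞) → ℝ≥0∞ → Prop
  | 0, _, f, C => f (fun i => i.elim0) ≤ C
  | (_ + 1), p, f, C => ∀ (F : Finset ℕ) (x : ℕ → ℝ≥0),
      mixedBdd (fun i => p i.succ) (fun t => ∑ j ∈ F, (x j : ℝ≥0∞) * f (Fin.cons j t))
        (C * (∑ j ∈ F, (x j : ℝ≥0∞) ^ (p 0)) ^ (1 / p 0))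

lemma mixedNorm_smul : ∀ (k : ℕ) (q : Fin k → ℝ) (_ : ∀ i, 1 ≤ q i)
    (f : (Fin k → ℕ) → ℝ≥0∞) (c : ℝ≥0∞),
    mixedNorm q (fun t => c * f t) = c * mixedNorm q f := by
  intro k
  induction k with
  | zero => intro q _ f c; simp [mixedNorm]
  | succ k ih =>
    intro q hq f c
    have h0 : 0 < q 0 := lt_of_lt_of_le one_pos (hq 0)
    simp only [mixedNorm]
    simp_rw [ih (fun i => q i.succ) (fun i => hq _) (fun t => f (Fin.cons _ t)) c,
      ENNReal.mul_rpow_of_nonneg _ _ h0.le, ENNReal.tsum_mul_left]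
    rw [ENNReal.mul_rpow_of_nonneg _ _ (by positivity), ← ENNReal.rpow_mul,
      mul_one_div_cancel h0.ne', ENNReal.rpow_one]

lemma mixedNorm_super : ∀ (k : ℕ) (q : Fin k → ℝ) (_ : ∀ i, 1 ≤ q i) (_ : Antitone q)
    (r : ℝ) (_ : 1 ≤ r) (_ : ∀ i, q i ≤ r) (f g : (Fin k → ℕ) → ℝ≥0∞),
    mixedNorm q f ^ r + mixedNorm q g ^ r ≤ mixedNorm q (fun t => f t + g t) ^ r := by
  intro k
  induction k with
  | zero => intro q _ _ r hr _ f g; simpa [mixedNorm] using ENNReal.add_rpow_le_rpow_add _ _ hr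
  | succ k ih =>
    intro q hq ha r hr hqr f g
    have h0 : 0 < q 0 := lt_of_lt_of_le one_pos (hq 0)
    have h1 : 1 ≤ r / q 0 := (one_le_div h0).2 (hqr 0)
    simp only [mixedNorm]
    simp only [← ENNReal.rpow_mul, one_div_mul_eq_div]
    refine (ENNReal.add_rpow_le_rpow_add _ _ h1).trans ?_
    refine ENNReal.rpow_le_rpow ?_ (by positivity)
    rw [← ENNReal.tsum_add]
    refine ENNReal.tsum_le_tsum fun j => ?_
    exact ih (fun i => q i.succ) (fun i => hq _) (fun a b h => ha (Fin.succ_le_succ_iff.2 h))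
      (q 0) (hq 0) (fun i => ha (Fin.zero_le _)) _ _

lemma mixedNorm_zero (k : ℕ) (q : Fin k → ℝ) (hq : ∀ i, 1 ≤ q i) :
    mixedNorm q (fun _ => 0) = 0 := by
  simpa using mixedNorm_smul k q hq (fun _ => 0) 0

lemma mixedNorm_super_sum (k : ℕ) (q : Fin k → ℝ) (hq : ∀ i, 1 ≤ q i) (ha : Antitone q)
    (r : ℝ) (hr : 1 ≤ r) (hqr : ∀ i, q i ≤ r) (F : Finset ℕ) (f : ℕ → (Fin k → ℕ) → ℝ≥0∞) :
    ∑ j ∈ F, mixedNorm q (f j) ^ r ≤ mixedNorm q (fun t => ∑ j ∈ F, f j t) ^ r := by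
  classical
  induction F using Finset.induction_on with
  | empty => simp
  | insert a s has ih =>
    simp only [Finset.sum_insert has]
    exact (add_le_add le_rfl ih).trans (mixedNorm_super k q hq ha r hr hqr _ _)

lemma mixedNorm_le : ∀ (k : ℕ) (p : Fin k → ℝ) (d : ℕ → ℝ) (_ : ∀ i, 0 < p i)
    (_ : 0 < d 0) (_ : d k = 1) (_ : ∀ i : Fin k, d i = d (i + 1) - 1 / p i)
    (f : (Fin k → ℕ) → ℝ≥0∞) (C : ℝ≥0∞), mixedBdd p f C →
    mixedNorm (fun s : Fin k => 1 / d s) f ≤ C := by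
  intro k
  induction k with
  | zero => intro p d _ _ _ _ f C h; simpa [mixedNorm, mixedBdd] using h
  | succ k ih =>
    intro p d hp hd0 hdk hd f C h
    by_cases hC : C = ⊤
    · simp [hC]
    have hstep : ∀ i, i < k + 1 → d i ≤ d (i + 1) := fun i hi => by
      have := hd ⟨i, hi⟩
      have h2 := hp ⟨i, hi⟩
      have : 0 < 1 / p ⟨i, hi⟩ := by positivity
      simp only at *
      linarith
    have hmono : ∀ i j, i ≤ j → j ≤ k + 1 → d i ≤ d j := by
      intro i j hij
      induction j, hij using Nat.le_induction with
      | base => intro _; exact le_rfl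
      | succ n hn ih2 => intro hj; exact (ih2 (by omega)).trans (hstep n (by omega))
    have hpos : ∀ i, i ≤ k + 1 → 0 < d i := fun i hi => hd0.trans_le (hmono 0 i (by omega) hi)
    have hle1 : ∀ i, i ≤ k + 1 → d i ≤ 1 := fun i hi => hdk ▸ hmono i (k+1) hi le_rfl
    have hp0 := hp 0
    have hd1 := hpos 1 (by omega)
    have hd01 : d 0 = d 1 - 1 / p 0 := by simpa using hd 0
    set qt : Fin k → ℝ := fun i => 1 / d (i + 1) with hqt
    have hqt1 : ∀ i, 1 ≤ qt i := fun i => by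
      have := i.2
      exact (one_le_div (hpos _ (by omega))).2 (hle1 _ (by omega))
    have hqta : Antitone qt := fun a b hab => by
      have := a.2
      have := b.2
      have : (a : ℕ) ≤ b := hab
      exact one_div_le_one_div_of_le (hpos _ (by omega)) (hmono _ _ (by omega) (by omega))
    have hr : 1 ≤ 1 / d 1 := (one_le_div hd1).2 (hle1 _ (by omega))
    have hqr : ∀ i, qt i ≤ 1 / d 1 := fun i => by
      have := i.2
      exact one_div_le_one_div_of_le hd1 (hmono _ _ (by omega) (by omega))
    have key : ∀ (F : Finset ℕ) (x : ℕ → ℝ≥0),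
        mixedNorm qt (fun t => ∑ j ∈ F, (x j : ℝ≥0∞) * f (Fin.cons j t)) ≤
        C * (∑ j ∈ F, (x j : ℝ≥0∞) ^ (p 0)) ^ (1 / p 0) := fun F x =>
      ih (fun i => p i.succ) (fun n => d (n + 1)) (fun i => hp _) hd1 hdk
        (fun i => by simpa using hd i.succ) _ _ (h F x)
    set b : ℕ → ℝ≥0∞ := fun j => mixedNorm qt (fun t => f (Fin.cons j t)) with hb
    have hbC : ∀ j, b j ≤ C := fun j => by
      simpa using key {j} (fun _ => 1)
    have hbt : ∀ j, b j ≠ ⊤ := fun j => ne_top_of_le_ne_top hC (hbC j)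
    have hN : mixedNorm (fun s : Fin (k + 1) => 1 / d s) f =
        (∑' j, b j ^ (1 / d 0)) ^ (1 / (1 / d 0)) := by
      simp only [mixedNorm, hb, hqt]
      rfl
    rw [hN, one_div_one_div]
    have hfin : ∀ F : Finset ℕ, ∑ j ∈ F, b j ^ (1 / d 0) ≤ C ^ (1 / d 0) := by
      intro F
      set S := ∑ j ∈ F, b j ^ (1 / d 0) with hS
      have hSt : S ≠ ⊤ := by
        rw [hS]
        exact (ENNReal.sum_lt_top.2 fun j _ =>
          ENNReal.rpow_lt_top_of_nonneg (by positivity) (hbt j)).ne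
      by_cases hS0 : S = 0
      · simp [hS0]
      have hx : ∀ j, ((((b j).toNNReal ^ (1 / d 0 / p 0) : ℝ≥0)) : ℝ≥0∞)
          = b j ^ (1 / d 0 / p 0) := fun j => by
        rw [ENNReal.coe_rpow_of_nonneg _ (by positivity), ENNReal.coe_toNNReal (hbt j)]
      have k1 := key F (fun j => (b j).toNNReal ^ (1 / d 0 / p 0))
      simp only [hx, ← ENNReal.rpow_mul, div_mul_cancel₀ _ hp0.ne'] at k1
      rw [← hS] at k1
      have k2 := mixedNorm_super_sum k qt hqt1 hqta (1 / d 1) hr hqr F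
        (fun j t => b j ^ (1 / d 0 / p 0) * f (Fin.cons j t))
      simp only [mixedNorm_smul k qt hqt1] at k2
      have hexp : 1 / d 0 / p 0 * (1 / d 1) + 1 / d 1 = 1 / d 0 := by
        have : d 1 = d 0 + 1 / p 0 := by linarith
        rw [this] at hd1 ⊢
        field_simp
        ring
      have k3 : S ≤ (C * S ^ (1 / p 0)) ^ (1 / d 1) := by
        refine le_trans (le_of_eq ?_) (k2.trans (ENNReal.rpow_le_rpow k1 (by positivity)))
        refine Finset.sum_congr rfl fun j _ => ?_
        change _ = (b j ^ (1 / d 0 / p 0) * b j) ^ (1 / d 1)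
        rw [ENNReal.mul_rpow_of_nonneg _ _ (by positivity), ← ENNReal.rpow_mul,
          ← ENNReal.rpow_add_of_nonneg _ _ (by positivity) (by positivity), hexp]
      have k4 : S ^ d 1 ≤ C * S ^ (1 / p 0) := by
        have := ENNReal.rpow_le_rpow k3 hd1.le
        rwa [← ENNReal.rpow_mul, one_div_mul_cancel hd1.ne', ENNReal.rpow_one] at this
      have k5 : S ^ d 0 ≤ C := by
        rw [hd01, ENNReal.rpow_sub _ _ hS0 hSt]
        exact ENNReal.div_le_of_le_mul k4
      have := ENNReal.rpow_le_rpow k5 (by positivity : 0 ≤ 1 / d 0)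
      rwa [← ENNReal.rpow_mul, mul_one_div_cancel hd0.ne', ENNReal.rpow_one] at this
    have hts : ∑' j, b j ^ (1 / d 0) ≤ C ^ (1 / d 0) := by
      rw [ENNReal.tsum_eq_iSup_sum]
      exact iSup_le hfin
    have := ENNReal.rpow_le_rpow hts hd0.le
    rwa [← ENNReal.rpow_mul, one_div_mul_cancel hd0.ne', ENNReal.rpow_one] at this

/-- Fill the first `M` slots with `v` and the others with unit vectors. -/
def combVec (𝕂 : Type*) [RCLike 𝕂] {m : ℕ} (p : Fin m → ℝ) (k M : ℕ) (hM : M + k = m)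
    (v : ∀ i : Fin m, lp (fun _ : ℕ => 𝕂) (ENNReal.ofReal (p i))) (s : Fin k → ℕ) :
    ∀ i : Fin m, lp (fun _ : ℕ => 𝕂) (ENNReal.ofReal (p i)) := fun i =>
  if h : (i : ℕ) < M then v i
  else lp.single (ENNReal.ofReal (p i)) (s ⟨(i : ℕ) - M, by have := i.isLt; omega⟩) 1

lemma combVec_cons (𝕂 : Type*) [RCLike 𝕂] {m : ℕ} (p : Fin m → ℝ) (k M : ℕ)
    (hM : M + (k + 1) = m) (hM' : M + 1 + k = m)
    (v : ∀ i : Fin m, lp (fun _ : ℕ => 𝕂) (ENNReal.ofReal (p i))) (t : Fin k → ℕ) (j : ℕ) :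
    combVec 𝕂 p (k + 1) M hM v (Fin.cons j t) =
      Function.update (combVec 𝕂 p (k + 1) M hM v (Fin.cons 0 t)) ⟨M, by omega⟩
        (lp.single _ j 1) := by
  funext i
  by_cases hi : i = ⟨M, by omega⟩
  · subst hi
    rw [Function.update_self]
    simp [combVec]
  · rw [Function.update_of_ne hi]
    have hi' : (i : ℕ) ≠ M := fun h => hi (Fin.ext h)
    unfold combVec
    split_ifs with h
    · rfl
    · have := i.isLt
      have e : (⟨(i : ℕ) - M, by omega⟩ : Fin (k + 1)) =
        Fin.succ ⟨(i : ℕ) - (M + 1), by omega⟩ := Fin.ext (by simp; omega)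
      rw [e, Fin.cons_succ, Fin.cons_succ]

lemma combVec_update (𝕂 : Type*) [RCLike 𝕂] {m : ℕ} (p : Fin m → ℝ) (k M : ℕ)
    (hM : M + (k + 1) = m) (hM' : M + 1 + k = m)
    (v : ∀ i : Fin m, lp (fun _ : ℕ => 𝕂) (ENNReal.ofReal (p i))) (t : Fin k → ℕ)
    (w : lp (fun _ : ℕ => 𝕂) (ENNReal.ofReal (p ⟨M, by omega⟩))) :
    combVec 𝕂 p k (M + 1) hM' (Function.update v ⟨M, by omega⟩ w) t =
      Function.update (combVec 𝕂 p (k + 1) M hM v (Fin.cons 0 t)) ⟨M, by omega⟩ w := by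
  funext i
  by_cases hi : i = ⟨M, by omega⟩
  · subst hi
    rw [Function.update_self]
    simp [combVec]
  · rw [Function.update_of_ne hi]
    have hi' : (i : ℕ) ≠ M := fun h => hi (Fin.ext h)
    have := i.isLt
    unfold combVec
    by_cases h : (i : ℕ) < M
    · rw [dif_pos h, dif_pos (by omega), Function.update_of_ne hi]
    · rw [dif_neg h, dif_neg (by omega)]
      have e : (⟨(i : ℕ) - M, by omega⟩ : Fin (k + 1)) =
        Fin.succ ⟨(i : ℕ) - (M + 1), by omega⟩ := Fin.ext (by simp; omega)
      rw [e, Fin.cons_succ]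

lemma mixedBdd_form (𝕂 : Type*) [RCLike 𝕂] {m : ℕ} (p : Fin m → ℝ) (hp : ∀ i, 1 < p i)
    [∀ i, Fact (1 ≤ ENNReal.ofReal (p i))]
    (A : ContinuousMultilinearMap 𝕂
      (fun i : Fin m => lp (fun _ : ℕ => 𝕂) (ENNReal.ofReal (p i))) 𝕂) :
    ∀ (k M : ℕ) (hM : M + k = m)
      (v : ∀ i : Fin m, lp (fun _ : ℕ => 𝕂) (ENNReal.ofReal (p i)))
      (_ : ∀ i : Fin m, M ≤ (i : ℕ) → ‖v i‖ = 1)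
      (_ : ∀ s : Fin k → ℕ, 0 ≤ RCLike.re (A (combVec 𝕂 p k M hM v s))),
      mixedBdd (fun s : Fin k => p ⟨M + s, by omega⟩)
        (fun s => ENNReal.ofReal (RCLike.re (A (combVec 𝕂 p k M hM v s))))
        (ENNReal.ofReal (‖A‖ * ∏ i, ‖v i‖)) := by
  intro k
  induction k with
  | zero =>
    intro M hM v hv hnn
    simp only [mixedBdd]
    refine ENNReal.ofReal_le_ofReal ?_
    have : combVec 𝕂 p 0 M hM v (fun i => i.elim0) = v := by
      funext i
      have := i.isLt
      simp only [combVec]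
      rw [dif_pos (by omega)]
    rw [this]
    exact (RCLike.re_le_norm _).trans (A.le_opNorm v)
  | succ k ih =>
    intro M hM v hv hnn F x
    have hM' : M + 1 + k = m := by omega
    set a : Fin m := ⟨M, by omega⟩ with ha
    have hpa : 0 < p a := one_pos.trans (hp a)
    set w : lp (fun _ : ℕ => 𝕂) (ENNReal.ofReal (p a)) :=
      ∑ j ∈ F, lp.single _ j (((x j : ℝ) : 𝕂)) with hw
    have hA : ∀ t : Fin k → ℕ,
        RCLike.re (A (combVec 𝕂 p k (M + 1) hM' (Function.update v a w) t)) =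
        ∑ j ∈ F, (x j : ℝ) * RCLike.re (A (combVec 𝕂 p (k + 1) M hM v (Fin.cons j t))) := by
      intro t
      have hw2 : w = ∑ j ∈ F, ((x j : ℝ) : 𝕂) •
          (lp.single (E := fun _ : ℕ => 𝕂) (ENNReal.ofReal (p a)) j (1 : 𝕂)) := by
        rw [hw]
        refine Finset.sum_congr rfl fun j _ => ?_
        rw [← lp.single_smul, smul_eq_mul, mul_one]
      rw [combVec_update 𝕂 p k M hM hM' v t w, hw2]
      have hs := A.toMultilinearMap.map_update_sum F a
        (fun j => ((x j : ℝ) : 𝕂) •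
          (lp.single (E := fun _ : ℕ => 𝕂) (ENNReal.ofReal (p a)) j (1 : 𝕂)))
        (combVec 𝕂 p (k + 1) M hM v (Fin.cons 0 t))
      simp only [ContinuousMultilinearMap.coe_coe] at hs
      rw [hs, map_sum]
      refine Finset.sum_congr rfl fun j _ => ?_
      rw [ContinuousMultilinearMap.map_update_smul, combVec_cons 𝕂 p k M hM hM' v t j,
        smul_eq_mul, RCLike.re_ofReal_mul]
    have hwn : ‖w‖ = (∑ j ∈ F, (x j : ℝ) ^ p a) ^ (1 / p a) := by
      have h1 : (ENNReal.ofReal (p a)).toReal = p a := ENNReal.toReal_ofReal hpa.le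
      have := lp.norm_sum_single (E := fun _ : ℕ => 𝕂) (p := ENNReal.ofReal (p a))
        (by rw [h1]; exact hpa) (fun j => ((x j : ℝ) : 𝕂)) F
      rw [h1, ← hw] at this
      have h2 : ∀ j, ‖((x j : ℝ) : 𝕂)‖ = x j := fun j => by
        rw [RCLike.norm_ofReal, abs_of_nonneg (NNReal.coe_nonneg (x j))]
      simp only [h2] at this
      rw [← this, ← Real.rpow_mul (norm_nonneg _), mul_one_div_cancel hpa.ne', Real.rpow_one]
    have hC : ENNReal.ofReal (‖A‖ * ∏ i, ‖v i‖) *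
        (∑ j ∈ F, (x j : ℝ≥0∞) ^ p a) ^ (1 / p a) =
        ENNReal.ofReal (‖A‖ * ∏ i, ‖Function.update v a w i‖) := by
      have e1 : ∏ i, ‖Function.update v a w i‖ = (∏ i, ‖v i‖) * ‖w‖ := by
        rw [← Finset.mul_prod_erase _ _ (Finset.mem_univ a),
          ← Finset.mul_prod_erase _ (fun i => ‖v i‖) (Finset.mem_univ a),
          hv a le_rfl, Function.update_self, one_mul, mul_comm]
        congr 1
        refine Finset.prod_congr rfl fun i hi => ?_
        rw [Function.update_of_ne (Finset.ne_of_mem_erase hi)]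
      have e2 : ENNReal.ofReal ‖w‖ = (∑ j ∈ F, (x j : ℝ≥0∞) ^ p a) ^ (1 / p a) := by
        rw [hwn, ← ENNReal.ofReal_rpow_of_nonneg (Finset.sum_nonneg fun j _ => by positivity)
          (by positivity), ENNReal.ofReal_sum_of_nonneg (fun j _ => by positivity)]
        congr 1
        refine Finset.sum_congr rfl fun j _ => ?_
        rw [← ENNReal.ofReal_rpow_of_nonneg (NNReal.coe_nonneg (x j)) hpa.le, ENNReal.ofReal_coe_nnreal]
      rw [e1, ← mul_assoc, ENNReal.ofReal_mul (q := ‖w‖) (by positivity), e2]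
    have hI := ih (M + 1) hM' (Function.update v a w)
      (fun i hi => by
        rw [Function.update_of_ne (fun h => by rw [h] at hi; simp [ha] at hi)]
        exact hv i (by omega))
      (fun t => by
        rw [hA]
        exact Finset.sum_nonneg fun j _ => mul_nonneg (NNReal.coe_nonneg (x j)) (hnn _))
    rw [← hC] at hI
    convert hI using 1
    · funext i
      exact congrArg p (Fin.ext (by simp only [Fin.val_succ]; omega))
    · funext t
      simp only
      rw [hA, ENNReal.ofReal_sum_of_nonneg fun j _ => mul_nonneg (NNReal.coe_nonneg (x j)) (hnn _)]
      refine Finset.sum_congr rfl fun j _ => ?_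
      rw [ENNReal.ofReal_mul (NNReal.coe_nonneg (x j)), ENNReal.ofReal_coe_nnreal]
    · rfl

/-- **The mixed inequality in the case `1/p₁ + ⋯ + 1/p_m ≥ 1`.**
Let `m ≥ 2` and `p₁, …, p_m ∈ (1, ∞)` (indexed here by `Fin m`, so that the paper's
`p_i` is `p ⟨i-1⟩`) with `1/p₁ + ⋯ + 1/p_m ≥ 1`, and suppose `i₀ ∈ {2, …, m}` is such
that `1/p_{i₀-1} + ⋯ + 1/p_m ≥ 1` and `1/p_{i₀} + ⋯ + 1/p_m < 1`.  Then for every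
bounded nonnegative `m`-linear form `A : ℓ_{p₁} × ⋯ × ℓ_{p_m} → 𝕂` one has
`sup_{j₁,…,j_{i₀-1}} (Σ_{j_{i₀}} ( ⋯ (Σ_{j_m} A(e_{j₁},…,e_{j_m})^{δ^{p_m}})^{δ^{p_{m-1},p_m}/δ^{p_m}} ⋯ )^{δ^{p_{i₀},…,p_m}/δ^{p_{i₀+1},…,p_m}})^{1/δ^{p_{i₀},…,p_m}} ≤ ‖A‖`,
where `δ^{p_k,…,p_m} = 1/(1 − (1/p_k + ⋯ + 1/p_m))`. -/
theorem mixed_inequality_large_exponent_sum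
    (𝕂 : Type*) [RCLike 𝕂] (m : ℕ) (hm : 2 ≤ m)
    (p : Fin m → ℝ) (hp : ∀ i, 1 < p i)
    [∀ i, Fact (1 ≤ ENNReal.ofReal (p i))]
    (hsum : 1 ≤ ∑ i, 1 / p i)
    (i₀ : ℕ) (hi₀ : 2 ≤ i₀) (hi₀' : i₀ ≤ m)
    (h1 : 1 ≤ ∑ l ∈ Finset.univ.filter (fun l : Fin m => i₀ - 2 ≤ (l : ℕ)), 1 / p l)
    (h2 : ∑ l ∈ Finset.univ.filter (fun l : Fin m => i₀ - 1 ≤ (l : ℕ)), 1 / p l < 1)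
    (A : ContinuousMultilinearMap 𝕂
      (fun i : Fin m => lp (fun _ : ℕ => 𝕂) (ENNReal.ofReal (p i))) 𝕂)
    (hA : ∀ j : Fin m → ℕ, ∃ r : ℝ, 0 ≤ r ∧
      A (fun i => lp.single (ENNReal.ofReal (p i)) (j i) 1) = (r : 𝕂)) :
    ⨆ t : Fin (i₀ - 1) → ℕ,
      mixedNorm
        (fun s : Fin (m - (i₀ - 1)) =>
          1 / (1 - ∑ l ∈ Finset.univ.filter
                (fun l : Fin m => (i₀ - 1) + (s : ℕ) ≤ (l : ℕ)), 1 / p l))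
        (fun s : Fin (m - (i₀ - 1)) → ℕ =>
          ENNReal.ofReal (RCLike.re
            (A (fun i => lp.single (ENNReal.ofReal (p i))
              (if h : (i : ℕ) < i₀ - 1 then t ⟨i, h⟩
                else s ⟨(i : ℕ) - (i₀ - 1), by have := i.isLt; omega⟩) 1))))
      ≤ ENNReal.ofReal ‖A‖ := by

  refine iSup_le fun t => ?_
  have hM : (i₀ - 1) + (m - (i₀ - 1)) = m := by omega
  set v : ∀ i : Fin m, lp (fun _ : ℕ => 𝕂) (ENNReal.ofReal (p i)) := fun i =>
    lp.single _ (if h : (i : ℕ) < (i₀ - 1) then t ⟨i, h⟩ else 0) 1 with hv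
  have hv1 : ∀ i, ‖v i‖ = 1 := fun i => by
    rw [hv]
    simp only
    rw [lp.norm_single (ENNReal.ofReal_pos.2 (one_pos.trans (hp i))), norm_one]
  have hcomb : ∀ s : Fin (m - (i₀ - 1)) → ℕ, combVec 𝕂 p (m - (i₀ - 1)) (i₀ - 1) hM v s =
      fun i => lp.single (ENNReal.ofReal (p i))
        (if h : (i : ℕ) < (i₀ - 1) then t ⟨i, h⟩
          else s ⟨(i : ℕ) - (i₀ - 1), by have := i.isLt; omega⟩) 1 := by
    intro s
    funext i
    simp only [combVec, hv]
    split_ifs <;> rfl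
  have hB := mixedBdd_form 𝕂 p hp A (m - (i₀ - 1)) (i₀ - 1) hM v (fun i _ => hv1 i) (fun s => by
    rw [hcomb]
    obtain ⟨r, hr, hr2⟩ := hA (fun i => if h : (i : ℕ) < (i₀ - 1) then t ⟨i, h⟩
          else s ⟨(i : ℕ) - (i₀ - 1), by have := i.isLt; omega⟩)
    rw [hr2, RCLike.ofReal_re]
    exact hr)
  simp only [hcomb, hv1, Finset.prod_const_one, mul_one] at hB
  refine mixedNorm_le (m - (i₀ - 1)) (fun s => p ⟨(i₀ - 1) + s, by omega⟩)
    (fun n => 1 - ∑ l ∈ Finset.univ.filter (fun l : Fin m => (i₀ - 1) + n ≤ (l : ℕ)), 1 / p l)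
    (fun i => one_pos.trans (hp _)) ?_ ?_ ?_ _ _ hB
  · simp only [add_zero]
    linarith
  · have : Finset.univ.filter (fun l : Fin m => (i₀ - 1) + (m - (i₀ - 1)) ≤ (l : ℕ)) = ∅ := by
      refine Finset.filter_eq_empty_iff.2 fun l _ => ?_
      have := l.isLt
      omega
    simp only [this, Finset.sum_empty, sub_zero]
  · intro s
    have hs := s.isLt
    have : Finset.univ.filter (fun l : Fin m => (i₀ - 1) + (s : ℕ) ≤ (l : ℕ)) =
        insert ⟨(i₀ - 1) + s, by omega⟩
          (Finset.univ.filter (fun l : Fin m => (i₀ - 1) + ((s : ℕ) + 1) ≤ (l : ℕ))) := by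
      ext l
      simp only [Finset.mem_filter, Finset.mem_univ, true_and, Finset.mem_insert, Fin.ext_iff]
      omega
    simp only [this]
    rw [Finset.sum_insert (by simp)]
    ring
end
end
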